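/- arXiv:1402.1891 — 3 statements merged into one kernel-verified Lean document; each statement's English description precedes it below -/
import Mathlib

section
/- Let H be a Hopf algebra with invertible antipode, A a right H-comodule algebra, and f: H → A a total integral which is an algebra map (with convolution inverse f^{-1} = f∘S). Then A, equipped with its original right H-coaction and the right H-action a·h = f^{-1}(h(1)) a f(h(2)), is a right-right Yetter–Drinfeld module over H. -/
open TensorProduct LinearMap

noncomputable section

variable {k H A M : Type*} [Field k] [Ring H] [HopfAlgebra k H]
  [Ring A] [Algebra k A] [AddCommGroup M] [Module k M]

local notation "Δ" => (Coalgebra.comul (R := k) (A := H))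
local notation "εH" => (Coalgebra.counit (R := k) (A := H))
local notation "𝒮" => (HopfAlgebra.antipode (R := k) (A := H))
local notation "mulH" => (LinearMap.mul' k H)
local notation "mulA" => (LinearMap.mul' k A)

/-- Right-hand side of the right-right (anti) Yetter-Drinfeld compatibility:
`m ⊗ h ↦ act (m₍₀₎ ⊗ h⑵) ⊗ s h⑴ * m₍₁₎ * h⑶`, where the comultiplication of `H` is `Dh`,
its multiplication is `mH` and `s` plays the role of the (inverse of the) antipode. -/
def ydRhs (mH : H ⊗[k] H →ₗ[k] H) (Dh : H →ₗ[k] H ⊗[k] H) (s : H →ₗ[k] H)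
    (act : M ⊗[k] H →ₗ[k] M) (ρM : M →ₗ[k] M ⊗[k] H) : M ⊗[k] H →ₗ[k] M ⊗[k] H :=
  lTensor M (mH ∘ₗ TensorProduct.map s mH) ∘ₗ
  (TensorProduct.assoc k M H (H ⊗[k] H)).toLinearMap ∘ₗ
  rTensor (H ⊗[k] H) (rTensor H act ∘ₗ (TensorProduct.assoc k M H H).symm.toLinearMap ∘ₗ
      lTensor M (TensorProduct.comm k H H).toLinearMap) ∘ₗ
  (tensorTensorTensorComm k M H (H ⊗[k] H) H).toLinearMap ∘ₗ
  TensorProduct.map ρM (rTensor H Dh ∘ₗ Dh)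

/-- Right-hand side of the left-right anti-Yetter-Drinfeld compatibility:
`h ⊗ m ↦ act (h⑵ ⊗ m₍₀₎) ⊗ h⑶ * m₍₁₎ * s h⑴`. -/
def aydLRRhs (mH : H ⊗[k] H →ₗ[k] H) (Dh : H →ₗ[k] H ⊗[k] H) (s : H →ₗ[k] H)
    (act : H ⊗[k] M →ₗ[k] M) (ρM : M →ₗ[k] M ⊗[k] H) : H ⊗[k] M →ₗ[k] M ⊗[k] H :=
  TensorProduct.map act
      (mH ∘ₗ lTensor H mH ∘ₗ lTensor H (lTensor H s) ∘ₗ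
        lTensor H (TensorProduct.comm k H H).toLinearMap ∘ₗ
        (TensorProduct.assoc k H H H).toLinearMap) ∘ₗ
  (tensorTensorTensorComm k H (H ⊗[k] H) M H).toLinearMap ∘ₗ
  TensorProduct.map
    ((TensorProduct.assoc k H H H).toLinearMap ∘ₗ
      (TensorProduct.comm k H (H ⊗[k] H)).toLinearMap ∘ₗ lTensor H Dh ∘ₗ Dh) ρM

/-- Right-hand side of the right-left anti-Yetter-Drinfeld compatibility:
`m ⊗ h ↦ s h⑶ * m₍₋₁₎ * h⑴ ⊗ act (m₍₀₎ ⊗ h⑵)`. -/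
def aydRLRhs (mH : H ⊗[k] H →ₗ[k] H) (Dh : H →ₗ[k] H ⊗[k] H) (s : H →ₗ[k] H)
    (act : M ⊗[k] H →ₗ[k] M) (lρ : M →ₗ[k] H ⊗[k] M) : M ⊗[k] H →ₗ[k] H ⊗[k] M :=
  rTensor M (mH ∘ₗ (TensorProduct.comm k H H).toLinearMap ∘ₗ lTensor H s) ∘ₗ
  (TensorProduct.assoc k H H M).symm.toLinearMap ∘ₗ
  lTensor H (TensorProduct.comm k M H).toLinearMap ∘ₗ
  TensorProduct.map mH (rTensor H act ∘ₗ (TensorProduct.assoc k M H H).symm.toLinearMap) ∘ₗ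
  (tensorTensorTensorComm k H M H (H ⊗[k] H)).toLinearMap ∘ₗ
  TensorProduct.map lρ (lTensor H Dh ∘ₗ Dh)

/-- `sandwich p q (a ⊗ (x ⊗ y)) = p x * a * q y`. -/
def sandwich (p q : H →ₗ[k] A) : A ⊗[k] (H ⊗[k] H) →ₗ[k] A :=
  mulA ∘ₗ TensorProduct.map (mulA ∘ₗ TensorProduct.map p LinearMap.id) q ∘ₗ
    rTensor H (TensorProduct.comm k A H).toLinearMap ∘ₗ
    (TensorProduct.assoc k A H H).symm.toLinearMap

/-- The right `H`-action `a · h = g h⑴ * a * f h⑵` attached to a total integral `f` with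
convolution inverse `g`. -/
def intAct (Dh : H →ₗ[k] H ⊗[k] H) (f g : H →ₗ[k] A) : A ⊗[k] H →ₗ[k] A :=
  sandwich g f ∘ₗ lTensor A Dh

/-- The left `H`-action `h · a = f h⑵ * a * g h⑴`. -/
def intActL (Dh : H →ₗ[k] H ⊗[k] H) (f g : H →ₗ[k] A) : H ⊗[k] A →ₗ[k] A :=
  sandwich f g ∘ₗ lTensor A ((TensorProduct.comm k H H).toLinearMap ∘ₗ Dh) ∘ₗ
    (TensorProduct.comm k H A).toLinearMap

/-- The set of coinvariants `B = {a | ρ a = a ⊗ 1}`. -/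
def coinv (ρA : A →ₗ[k] A ⊗[k] H) : Set A := {a : A | ρA a = a ⊗ₜ[k] (1 : H)}

/-- The canonical Galois map `A ⊗ A → A ⊗ H`, `a ⊗ a' ↦ a * a'₍₀₎ ⊗ a'₍₁₎`. -/
def canMap (ρA : A →ₗ[k] A ⊗[k] H) : A ⊗[k] A →ₗ[k] A ⊗[k] H :=
  rTensor H mulA ∘ₗ (TensorProduct.assoc k A A H).symm.toLinearMap ∘ₗ lTensor A ρA

/-- The kernel of `A ⊗ A → A ⊗_B A`: the span of the elements `(a*b) ⊗ a' - a ⊗ (b*a')`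
with `b` a coinvariant; so `A ⊗_B A = (A ⊗ A) ⧸ galRel ρA`. -/
def galRel (ρA : A →ₗ[k] A ⊗[k] H) : Submodule k (A ⊗[k] A) :=
  Submodule.span k {x : A ⊗[k] A |
    ∃ a a' b : A, b ∈ coinv ρA ∧ x = (a * b) ⊗ₜ[k] a' - a ⊗ₜ[k] (b * a')}

/-- The span of the commutators `[A, B]`, `B` the coinvariants; `A_B = A ⧸ commSub ρA`. -/
def commSub (ρA : A →ₗ[k] A ⊗[k] H) : Submodule k A :=
  Submodule.span k {x : A | ∃ a b : A, b ∈ coinv ρA ∧ x = a * b - b * a}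

/-- `δ(h⑴) • s h⑵`, the twisted antipode. -/
def twistS (δl : H →ₗ[k] k) (s : H →ₗ[k] H) (Dh : H →ₗ[k] H ⊗[k] H) : H →ₗ[k] H :=
  (TensorProduct.lid k H).toLinearMap ∘ₗ TensorProduct.map δl s ∘ₗ Dh


open WithConv
open Algebra.TensorProduct (includeLeft includeRight)

lemma intAct_tmul (f g : H →ₗ[k] A) (a : A) (h : H) :
    intAct Δ f g (a ⊗ₜ[k] h) =
      (toConv g * toConv (LinearMap.mulLeft k a ∘ₗ f)) h := by
  rw [LinearMap.convMul_apply]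
  simp only [intAct, LinearMap.comp_apply, LinearMap.lTensor_tmul]
  induction (Coalgebra.comul (R := k) h) using TensorProduct.induction_on with
  | zero => simp
  | tmul x y => simp [sandwich, mul_assoc]
  | add x y hx hy => simp only [TensorProduct.tmul_add, map_add, hx, hy]

lemma toConv_comp_antipode_mul {B : Type*} [Ring B] [Algebra k B] (φ : H →ₐ[k] B) :
    toConv (φ.toLinearMap ∘ₗ 𝒮) * toConv φ.toLinearMap = 1 := by
  have h := LinearMap.algHom_comp_convMul_distrib φ (toConv 𝒮)
    (toConv (LinearMap.id (R := k) (M := H)))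
  rw [LinearMap.antipode_mul_id] at h
  apply WithConv.ofConv_injective
  simp only [ofConv_toConv, LinearMap.comp_id] at h
  rw [← h]
  ext x
  simp [LinearMap.convOne_def]

lemma comul_eq_conv :
    toConv Δ = toConv (includeLeft (R := k) (S := k) (A := H) (B := H)).toLinearMap *
      toConv (includeRight (R := k) (A := H) (B := H)).toLinearMap := by
  ext x
  rw [LinearMap.convMul_apply]
  change Coalgebra.comul (R := k) x = _
  induction (Coalgebra.comul (R := k) x) using TensorProduct.induction_on with
  | zero => simp
  | tmul x y => simp
  | add x y hx hy => simp only [map_add, ← hx, ← hy]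

lemma comul_antipode_conv :
    toConv (Δ ∘ₗ 𝒮) =
      toConv ((includeRight (R := k) (A := H) (B := H)).toLinearMap ∘ₗ 𝒮) *
      toConv ((includeLeft (R := k) (S := k) (A := H) (B := H)).toLinearMap ∘ₗ 𝒮) := by
  symm
  apply left_inv_eq_right_inv (a := toConv Δ) ?_ LinearMap.comul_right_inv
  refine (congrArg (_ * ·) comul_eq_conv).trans ?_
  have gen : ∀ p q r s : WithConv (H →ₗ[k] H ⊗[k] H),
      q * r = 1 → p * s = 1 → p * q * (r * s) = 1 := by
    intro p q r s h1 h2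
    rw [mul_assoc, ← mul_assoc q, h1, one_mul, h2]
  exact gen _ _ _ _ (toConv_comp_antipode_mul _) (toConv_comp_antipode_mul _)

/-- Left multiplication by `b` on values. -/
def lm {B : Type*} [Ring B] [Algebra k B] (b : B) (q : WithConv (H →ₗ[k] B)) :
    WithConv (H →ₗ[k] B) := toConv (LinearMap.mulLeft k b ∘ₗ q.ofConv)

lemma lm_mul {B : Type*} [Ring B] [Algebra k B] (b : B) (p q : WithConv (H →ₗ[k] B)) :
    lm b (p * q) = lm b p * q := by
  ext x
  simp [lm, (Coalgebra.Repr.arbitrary k x).convMul_apply, Finset.mul_sum, mul_assoc]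

lemma mul_lm_comm {B : Type*} [Ring B] [Algebra k B] (b : B) (p q : WithConv (H →ₗ[k] B))
    (h : ∀ x, b * p x = p x * b) :
    lm b p * q = p * lm b q := by
  ext x
  simp only [(Coalgebra.Repr.arbitrary k x).convMul_apply]
  refine Finset.sum_congr rfl fun i _ => ?_
  change (b * p _) * _ = _ * (b * _)
  rw [h, mul_assoc]

lemma ydRhs_tmul (act : A ⊗[k] H →ₗ[k] A) (ρA : A →ₗ[k] A ⊗[k] H) (a : A) (h : H)
    (b : A) (c : H) :
    (lTensor A (mulH ∘ₗ TensorProduct.map 𝒮 mulH) ∘ₗ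
      (TensorProduct.assoc k A H (H ⊗[k] H)).toLinearMap ∘ₗ
      rTensor (H ⊗[k] H) (rTensor H act ∘ₗ (TensorProduct.assoc k A H H).symm.toLinearMap ∘ₗ
      lTensor A (TensorProduct.comm k H H).toLinearMap) ∘ₗ
      (tensorTensorTensorComm k A H (H ⊗[k] H) H).toLinearMap)
      ((b ⊗ₜ c) ⊗ₜ (rTensor H Δ (Δ h))) =
    (toConv ((includeRight (R := k) (A := A) (B := H)).toLinearMap ∘ₗ 𝒮) *
      toConv ((includeLeft (R := k) (S := k) (A := A) (B := H)).toLinearMap ∘ₗ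
        act ∘ₗ TensorProduct.mk k A H b) *
      lm ((1 : A) ⊗ₜ[k] c) (toConv (includeRight (R := k) (A := A) (B := H)).toLinearMap)) h := by
  rw [LinearMap.convMul_apply]
  induction (Coalgebra.comul (R := k) h) using TensorProduct.induction_on with
  | zero => simp
  | add x y hx hy => simp only [TensorProduct.tmul_add, map_add, hx, hy]
  | tmul x y =>
    simp only [rTensor_tmul, TensorProduct.map_tmul, LinearMap.mul'_apply]
    rw [show ∀ p q : WithConv (H →ₗ[k] A ⊗[k] H), (p * q).ofConv x = (p * q) x from
      fun _ _ => rfl, LinearMap.convMul_apply]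
    induction (Coalgebra.comul (R := k) x) using TensorProduct.induction_on with
    | zero => simp
    | add x y hx hy => simp only [TensorProduct.tmul_add, TensorProduct.add_tmul, map_add, add_mul, hx, hy]
    | tmul u v => simp [lm, mul_assoc]

/-- For a total integral `f : H → A` which is an algebra map, `A` with its
original coaction and the action `a · h = f⁻¹ h⑴ * a * f h⑵` is a right-right Yetter-Drinfeld
module over `H`. -/
theorem total_integral_algebra_map_gives_YD
    (Sinv : H →ₗ[k] H) (hS₁ : Sinv ∘ₗ 𝒮 = LinearMap.id) (hS₂ : 𝒮 ∘ₗ Sinv = LinearMap.id)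
    (ρA : A →ₗ[k] A ⊗[k] H)
    (hρ_coassoc : (TensorProduct.assoc k A H H).toLinearMap ∘ₗ rTensor H ρA ∘ₗ ρA =
      lTensor A Δ ∘ₗ ρA)
    (hρ_counit : (TensorProduct.rid k A).toLinearMap ∘ₗ lTensor A εH ∘ₗ ρA = LinearMap.id)
    (hρ_one : ρA 1 = (1 : A) ⊗ₜ[k] (1 : H))
    (hρ_mul : ∀ x y : A, ρA (x * y) = ρA x * ρA y)
    (f : H →ₗ[k] A) (hf_one : f 1 = 1)
    (hf_comod : ρA ∘ₗ f = rTensor H f ∘ₗ Δ)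
    (hf_mul : ∀ x y : H, f (x * y) = f x * f y)
 :
    (intAct Δ f (f ∘ₗ 𝒮) ∘ₗ lTensor A mulH =
      intAct Δ f (f ∘ₗ 𝒮) ∘ₗ rTensor H (intAct Δ f (f ∘ₗ 𝒮)) ∘ₗ (TensorProduct.assoc k A H H).symm.toLinearMap) ∧
    (∀ x : A, (intAct Δ f (f ∘ₗ 𝒮)) (x ⊗ₜ[k] (1 : H)) = x) ∧
    (ρA ∘ₗ intAct Δ f (f ∘ₗ 𝒮) = ydRhs mulH Δ 𝒮 (intAct Δ f (f ∘ₗ 𝒮)) ρA) := by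
  have hf_alg : ∃ F : H →ₐ[k] A, F.toLinearMap = f :=
    ⟨AlgHom.ofLinearMap f hf_one hf_mul, by ext; rfl⟩
  obtain ⟨F, rfl⟩ := hf_alg
  let R : A →ₐ[k] A ⊗[k] H := AlgHom.ofLinearMap ρA hρ_one hρ_mul
  have hR : R.toLinearMap = ρA := by ext; rfl
  refine ⟨?_, ?_, ?_⟩
  · ext a x y
    have key : ∀ u v : H ⊗[k] H, sandwich (F.toLinearMap ∘ₗ 𝒮) F.toLinearMap (a ⊗ₜ[k] (u * v)) =
        sandwich (F.toLinearMap ∘ₗ 𝒮) F.toLinearMap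
          ((sandwich (F.toLinearMap ∘ₗ 𝒮) F.toLinearMap (a ⊗ₜ[k] u)) ⊗ₜ[k] v) := by
      intro u v
      induction u using TensorProduct.induction_on with
      | zero => simp
      | add x y hx hy =>
        simp only [add_mul, TensorProduct.tmul_add, TensorProduct.add_tmul, map_add, hx, hy]
      | tmul p q =>
        induction v using TensorProduct.induction_on with
        | zero => simp
        | add x y hx hy => simp only [mul_add, TensorProduct.tmul_add, map_add, hx, hy]
        | tmul r s => simp [sandwich, HopfAlgebra.antipode_mul_antidistrib, mul_assoc]
    simpa [intAct] using key (Δ x) (Δ y)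
  · intro x
    simp [intAct, sandwich, Algebra.TensorProduct.one_def]
  · ext a h
    simp only [AlgebraTensorModule.curry_apply, TensorProduct.curry_apply,
      LinearMap.restrictScalars_self, LinearMap.comp_apply, ydRhs, TensorProduct.map_tmul]
    rw [intAct_tmul]
    let iR := (includeRight (R := k) (A := A) (B := H))
    let iL := (includeLeft (R := k) (S := k) (A := A) (B := H))
    let FH : H ⊗[k] H →ₐ[k] A ⊗[k] H := Algebra.TensorProduct.map F (AlgHom.id k H)
    have hc : ρA ∘ₗ F.toLinearMap = FH.toLinearMap ∘ₗ Δ := hf_comod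
    have h1 : toConv (ρA ∘ₗ F.toLinearMap) = toConv (iL.toLinearMap ∘ₗ F.toLinearMap) *
        toConv iR.toLinearMap := by
      rw [hc]
      have := LinearMap.algHom_comp_convMul_distrib FH
        (toConv (includeLeft (R := k) (S := k) (A := H) (B := H)).toLinearMap)
        (toConv (includeRight (R := k) (A := H) (B := H)).toLinearMap)
      rw [← comul_eq_conv] at this
      apply WithConv.ofConv_injective
      refine this.trans ?_
      congr 3 <;> (ext; simp [FH, iL, iR])
    have h2 : toConv (ρA ∘ₗ F.toLinearMap ∘ₗ 𝒮) = toConv (iR.toLinearMap ∘ₗ 𝒮) *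
        toConv (iL.toLinearMap ∘ₗ F.toLinearMap ∘ₗ 𝒮) := by
      rw [← LinearMap.comp_assoc, hc]
      have := LinearMap.algHom_comp_convMul_distrib FH
        (toConv ((includeRight (R := k) (A := H) (B := H)).toLinearMap ∘ₗ 𝒮))
        (toConv ((includeLeft (R := k) (S := k) (A := H) (B := H)).toLinearMap ∘ₗ 𝒮))
      rw [← comul_antipode_conv] at this
      apply WithConv.ofConv_injective
      refine this.trans ?_
      congr 3 <;> (ext; simp [FH, iL, iR])
    have hL : ρA ((toConv (F.toLinearMap ∘ₗ 𝒮) *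
        toConv (LinearMap.mulLeft k a ∘ₗ F.toLinearMap)) h) =
        (toConv (ρA ∘ₗ F.toLinearMap ∘ₗ 𝒮) * lm (ρA a) (toConv (ρA ∘ₗ F.toLinearMap))) h := by
      simp [(Coalgebra.Repr.arbitrary k h).convMul_apply, lm, hρ_mul]
    rw [hL, h1, h2]
    clear hL
    generalize ρA a = z
    induction z using TensorProduct.induction_on with
    | zero =>
      simp [lm]
    | add x y hx hy =>
      simp only [TensorProduct.add_tmul, map_add, ← hx, ← hy]
      have : ∀ q : WithConv (H →ₗ[k] A ⊗[k] H), lm (x + y) q = lm x q + lm y q := by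
        intro q; ext u; simp [lm, add_mul]
      rw [this, mul_add]; rfl
    | tmul b c =>
      refine Eq.trans ?_ (ydRhs_tmul _ ρA a h b c).symm
      have e1 : ∀ q : WithConv (H →ₗ[k] A ⊗[k] H),
          lm (b ⊗ₜ[k] c) q = lm (b ⊗ₜ[k] 1) (lm (1 ⊗ₜ[k] c) q) := by
        intro q; ext u; simp [lm, ← mul_assoc]
      have e2 : toConv (iL.toLinearMap ∘ₗ intAct Δ F.toLinearMap (F.toLinearMap ∘ₗ 𝒮) ∘ₗ
          TensorProduct.mk k A H b) = toConv (iL.toLinearMap ∘ₗ F.toLinearMap ∘ₗ 𝒮) *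
            lm (b ⊗ₜ[k] 1) (toConv (iL.toLinearMap ∘ₗ F.toLinearMap)) := by
        ext u
        change iL (intAct Δ F.toLinearMap (F.toLinearMap ∘ₗ 𝒮) (b ⊗ₜ[k] u)) = _
        rw [intAct_tmul]
        simp [(Coalgebra.Repr.arbitrary k u).convMul_apply, lm, iL, TensorProduct.sum_tmul]
      change _ = (toConv (iR.toLinearMap ∘ₗ 𝒮) * toConv (iL.toLinearMap ∘ₗ
        intAct Δ F.toLinearMap (F.toLinearMap ∘ₗ 𝒮) ∘ₗ TensorProduct.mk k A H b) *
        lm (1 ⊗ₜ[k] c) (toConv iR.toLinearMap)) h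
      rw [e2, e1, lm_mul, mul_lm_comm, lm_mul]
      · simp only [mul_assoc]
      · intro u; simp [iL]
end
end

section
/- Let H be a Hopf algebra with invertible antipode, A a right H-comodule algebra with coinvariant subalgebra B, and f: H → A a total integral which is an algebra map (with convolution inverse f^{-1} = f∘S). Then the quotient space A_B = A/[A,B], with the coaction induced from the original right H-coaction of A and the left H-action h·a = f(h(2)) a f^{-1}(h(1)), is a left-right anti Yetter–Drinfeld module over H. Moreover, if a(0) f^{-1}(a(1)(1)) f(a(1)(2)) = a holds for all a, then this anti Yetter–Drinfeld module is stable. -/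
open TensorProduct LinearMap

noncomputable section

variable {k H A M : Type*} [Field k] [Ring H] [HopfAlgebra k H]
  [Ring A] [Algebra k A] [AddCommGroup M] [Module k M]

local notation "Δ" => (Coalgebra.comul (R := k) (A := H))
local notation "εH" => (Coalgebra.counit (R := k) (A := H))
local notation "𝒮" => (HopfAlgebra.antipode (R := k) (A := H))
local notation "mulH" => (LinearMap.mul' k H)
local notation "mulA" => (LinearMap.mul' k A)

section helpers

variable {X Y : Type*} [Ring X] [Algebra k X] [Ring Y] [Algebra k Y]

/-- Convolution `m ↦ p m₍₀₎ * u m₍₁₎` along a coaction. -/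
def st (ρ : M →ₗ[k] M ⊗[k] H) (p : M →ₗ[k] X) (u : H →ₗ[k] X) : M →ₗ[k] X :=
  LinearMap.mul' k X ∘ₗ TensorProduct.map p u ∘ₗ ρ

/-- The convolution unit. -/
def cu (k H X : Type*) [Field k] [Ring H] [HopfAlgebra k H] [Ring X] [Algebra k X] :
    H →ₗ[k] X :=
  Algebra.linearMap k X ∘ₗ Coalgebra.counit (R := k) (A := H)

theorem st_key (ρ : M →ₗ[k] M ⊗[k] H) (p : M →ₗ[k] X) (u v : H →ₗ[k] X) (t : M ⊗[k] H) :
    LinearMap.mul' k X (TensorProduct.map (st ρ p u) v t) =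
      LinearMap.mul' k X (TensorProduct.map p (LinearMap.mul' k X ∘ₗ TensorProduct.map u v)
        (TensorProduct.assoc k M H H (rTensor H ρ t))) := by
  induction t with
  | zero => simp
  | add x y hx hy => simp only [map_add, hx, hy]
  | tmul m h =>
    simp only [st, TensorProduct.map_tmul, rTensor_tmul, LinearMap.comp_apply]
    generalize ρ m = s
    induction s with
    | zero => simp
    | add x y hx hy =>
      simp only [map_add, hx, hy, TensorProduct.add_tmul]
    | tmul a g => simp [mul_assoc]

theorem st_assoc (ρ : M →ₗ[k] M ⊗[k] H)
    (hco : (TensorProduct.assoc k M H H).toLinearMap ∘ₗ rTensor H ρ ∘ₗ ρ = lTensor M Δ ∘ₗ ρ)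
    (p : M →ₗ[k] X) (u v : H →ₗ[k] X) :
    st ρ (st ρ p u) v = st ρ p (st Δ u v) := by
  ext m
  have h1 := st_key ρ p u v (ρ m)
  have h2 : TensorProduct.assoc k M H H (rTensor H ρ (ρ m)) = lTensor M Δ (ρ m) :=
    LinearMap.congr_fun hco m
  rw [h2] at h1
  change LinearMap.mul' k X (TensorProduct.map (st ρ p u) v (ρ m)) =
    LinearMap.mul' k X (TensorProduct.map p (st Δ u v) (ρ m))
  rw [h1]
  generalize ρ m = s
  induction s with
  | zero => simp
  | add x y hx hy => simp only [map_add, hx, hy]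
  | tmul a g => simp [st]

theorem stD_assoc (p : H →ₗ[k] X) (u v : H →ₗ[k] X) :
    st Δ (st Δ p u) v = st Δ p (st Δ u v) :=
  st_assoc Δ Coalgebra.coassoc p u v

theorem st_cu (ρ : M →ₗ[k] M ⊗[k] H)
    (hcu : (TensorProduct.rid k M).toLinearMap ∘ₗ lTensor M εH ∘ₗ ρ = LinearMap.id)
    (p : M →ₗ[k] X) : st ρ p (cu k H X) = p := by
  ext m
  have h2 : TensorProduct.rid k M (lTensor M εH (ρ m)) = m := LinearMap.congr_fun hcu m
  conv_rhs => rw [← h2]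
  change LinearMap.mul' k X (TensorProduct.map p (cu k H X) (ρ m)) = _
  generalize ρ m = s
  induction s with
  | zero => simp
  | add x y hx hy => simp only [map_add, hx, hy]
  | tmul a g => simp [cu, Algebra.smul_def, Algebra.commutes]

theorem stD_cu (p : H →ₗ[k] X) : st Δ p (cu k H X) = p := by
  apply st_cu
  ext h
  simp

theorem cu_st (p : H →ₗ[k] X) : st Δ (cu k H X) p = p := by
  ext m
  have h2 : TensorProduct.lid k H (rTensor H εH (Δ m)) = m := by simp
  conv_rhs => rw [← h2]
  change LinearMap.mul' k X (TensorProduct.map (cu k H X) p (Δ m)) = _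
  generalize Δ m = s
  induction s with
  | zero => simp
  | add x y hx hy => simp only [map_add, hx, hy]
  | tmul a g => simp [cu, ← Algebra.smul_def]

theorem map_st (g : X →ₐ[k] Y) (ρ : M →ₗ[k] M ⊗[k] H) (p : M →ₗ[k] X) (u : H →ₗ[k] X) :
    g.toLinearMap ∘ₗ st ρ p u = st ρ (g.toLinearMap ∘ₗ p) (g.toLinearMap ∘ₗ u) := by
  ext m
  simp only [st, LinearMap.comp_apply]
  generalize ρ m = s
  induction s with
  | zero => simp
  | add x y hx hy => simp only [map_add, hx, hy]
  | tmul a g => simp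

theorem S_st (g : H →ₐ[k] X) : st Δ (g.toLinearMap ∘ₗ 𝒮) g.toLinearMap = cu k H X := by
  have h0 : st Δ 𝒮 (LinearMap.id : H →ₗ[k] H) = cu k H H :=
    HopfAlgebra.mul_antipode_rTensor_comul
  have := map_st g Δ 𝒮 LinearMap.id
  rw [h0] at this
  rw [LinearMap.comp_id] at this
  rw [← this]
  ext h
  simp [cu]

theorem st_S (g : H →ₐ[k] X) : st Δ g.toLinearMap (g.toLinearMap ∘ₗ 𝒮) = cu k H X := by
  have h0 : st Δ (LinearMap.id : H →ₗ[k] H) 𝒮 = cu k H H :=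
    HopfAlgebra.mul_antipode_lTensor_comul
  have := map_st g Δ LinearMap.id 𝒮
  rw [h0] at this
  rw [LinearMap.comp_id] at this
  rw [← this]
  ext h
  simp [cu]

theorem st_mid (ρ : M →ₗ[k] M ⊗[k] H) (p : M →ₗ[k] X) (u : H →ₗ[k] X) (b : X) :
    st ρ (LinearMap.mulRight k b ∘ₗ p) u = st ρ p (LinearMap.mulLeft k b ∘ₗ u) := by
  ext m
  simp only [st, LinearMap.comp_apply]
  generalize ρ m = s
  induction s with
  | zero => simp
  | add x y hx hy => simp only [map_add, hx, hy]
  | tmul a g => simp [mul_assoc]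

theorem mulLeft_st (ρ : M →ₗ[k] M ⊗[k] H) (p : M →ₗ[k] X) (u : H →ₗ[k] X) (b : X) :
    LinearMap.mulLeft k b ∘ₗ st ρ p u = st ρ (LinearMap.mulLeft k b ∘ₗ p) u := by
  ext m
  simp only [st, LinearMap.comp_apply]
  generalize ρ m = s
  induction s with
  | zero => simp
  | add x y hx hy => simp only [map_add, hx, hy]
  | tmul a g => simp [mul_assoc]

theorem mulRight_st (ρ : M →ₗ[k] M ⊗[k] H) (p : M →ₗ[k] X) (u : H →ₗ[k] X) (b : X) :
    LinearMap.mulRight k b ∘ₗ st ρ p u = st ρ p (LinearMap.mulRight k b ∘ₗ u) := by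
  ext m
  simp only [st, LinearMap.comp_apply]
  generalize ρ m = s
  induction s with
  | zero => simp
  | add x y hx hy => simp only [map_add, hx, hy]
  | tmul a g => simp [mul_assoc]

/-- inclusion of `A` into `A ⊗ H` -/
abbrev iA (k H A : Type*) [Field k] [Ring H] [HopfAlgebra k H] [Ring A] [Algebra k A] :
    A →ₐ[k] A ⊗[k] H := Algebra.TensorProduct.includeLeft

/-- inclusion of `H` into `A ⊗ H` -/
abbrev iH (k H A : Type*) [Field k] [Ring H] [HopfAlgebra k H] [Ring A] [Algebra k A] :
    H →ₐ[k] A ⊗[k] H := Algebra.TensorProduct.includeRight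

theorem rTensor_st (p : M →ₗ[k] A) (ρ : M →ₗ[k] M ⊗[k] H) :
    rTensor H p ∘ₗ ρ = st ρ ((iA k H A).toLinearMap ∘ₗ p) (iH k H A).toLinearMap := by
  ext m
  simp only [st, LinearMap.comp_apply]
  generalize ρ m = s
  induction s with
  | zero => simp
  | add x y hx hy => simp only [map_add, hx, hy]
  | tmul a g => simp

variable (r : A →ₐ[k] A ⊗[k] H) (f : H →ₐ[k] A)

theorem rho_fS (hf : r.toLinearMap ∘ₗ f.toLinearMap = rTensor H f.toLinearMap ∘ₗ Δ) :
    r.toLinearMap ∘ₗ f.toLinearMap ∘ₗ 𝒮 =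
      st Δ ((iH k H A).toLinearMap ∘ₗ 𝒮) ((iA k H A).toLinearMap ∘ₗ f.toLinearMap ∘ₗ 𝒮) := by
  rw [rTensor_st] at hf
  have h1 := S_st (r.comp f)
  have e1 : (r.comp f).toLinearMap = r.toLinearMap ∘ₗ f.toLinearMap := rfl
  have h3 := st_S ((iA k H A).comp f)
  have e3 : ((iA k H A).comp f).toLinearMap = (iA k H A).toLinearMap ∘ₗ f.toLinearMap := rfl
  rw [e1, LinearMap.comp_assoc] at h1
  rw [e3, LinearMap.comp_assoc] at h3
  have h2 : st Δ (r.toLinearMap ∘ₗ f.toLinearMap)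
      (st Δ ((iH k H A).toLinearMap ∘ₗ 𝒮) ((iA k H A).toLinearMap ∘ₗ f.toLinearMap ∘ₗ 𝒮)) =
      cu k H (A ⊗[k] H) := by
    rw [hf, stD_assoc, ← stD_assoc (iH k H A).toLinearMap, st_S, cu_st, h3]
  rw [← stD_cu (r.toLinearMap ∘ₗ f.toLinearMap ∘ₗ 𝒮), ← h2, ← stD_assoc, h1, cu_st]

/-- `h ↦ f h⑴ * b * f (S h⑵)` -/
def bp (b : A) : H →ₗ[k] A :=
  st Δ f.toLinearMap (LinearMap.mulLeft k b ∘ₗ f.toLinearMap ∘ₗ 𝒮)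

theorem bp_coinv (hf : r.toLinearMap ∘ₗ f.toLinearMap = rTensor H f.toLinearMap ∘ₗ Δ)
    (b : A) (hb : b ∈ coinv r.toLinearMap) (h : H) : bp f b h ∈ coinv r.toLinearMap := by
  have key : r.toLinearMap ∘ₗ bp f b = (iA k H A).toLinearMap ∘ₗ bp f b := by
    have hb' : r b = b ⊗ₜ[k] (1 : H) := hb
    have e1 : r.toLinearMap ∘ₗ LinearMap.mulLeft k b ∘ₗ f.toLinearMap ∘ₗ 𝒮 =
        LinearMap.mulLeft k (b ⊗ₜ[k] (1 : H)) ∘ₗ r.toLinearMap ∘ₗ f.toLinearMap ∘ₗ 𝒮 := by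
      ext x
      simp [hb']
    have e2 : (iA k H A).toLinearMap ∘ₗ LinearMap.mulLeft k b ∘ₗ f.toLinearMap ∘ₗ 𝒮 =
        LinearMap.mulLeft k (b ⊗ₜ[k] (1 : H)) ∘ₗ
          (iA k H A).toLinearMap ∘ₗ f.toLinearMap ∘ₗ 𝒮 := by
      ext x
      simp
    have e3 : LinearMap.mulLeft k (b ⊗ₜ[k] (1 : H)) ∘ₗ (iH k H A).toLinearMap ∘ₗ 𝒮 =
        LinearMap.mulRight k (b ⊗ₜ[k] (1 : H)) ∘ₗ (iH k H A).toLinearMap ∘ₗ 𝒮 := by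
      ext x
      simp
    unfold bp
    rw [map_st, map_st, e1, e2, rho_fS r f hf, hf, rTensor_st, mulLeft_st, e3, st_mid, stD_assoc,
      ← stD_assoc (iH k H A).toLinearMap, st_S, cu_st]
  exact LinearMap.congr_fun key h

theorem bp_left (b : A) : st Δ (f.toLinearMap ∘ₗ 𝒮) (bp f b) =
    LinearMap.mulLeft k b ∘ₗ f.toLinearMap ∘ₗ 𝒮 := by
  rw [bp, ← stD_assoc, S_st, cu_st]

theorem bp_right (b : A) : st Δ (bp f b) f.toLinearMap =
    LinearMap.mulRight k b ∘ₗ f.toLinearMap := by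
  rw [bp, ← st_mid, stD_assoc, S_st, stD_cu]

/-- `a ↦ a₍₀₎ * f (S a₍₁₎)` -/
def TT : A →ₗ[k] A := st r.toLinearMap LinearMap.id (f.toLinearMap ∘ₗ 𝒮)

theorem TT_coinv
    (hco : (TensorProduct.assoc k A H H).toLinearMap ∘ₗ rTensor H r.toLinearMap ∘ₗ r.toLinearMap =
      lTensor A Δ ∘ₗ r.toLinearMap)
    (hf : r.toLinearMap ∘ₗ f.toLinearMap = rTensor H f.toLinearMap ∘ₗ Δ) (a : A) :
    TT r f a ∈ coinv r.toLinearMap := by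
  have key : r.toLinearMap ∘ₗ TT r f = (iA k H A).toLinearMap ∘ₗ TT r f := by
    have e := rTensor_st (LinearMap.id) r.toLinearMap
    rw [rTensor_id, LinearMap.id_comp] at e
    unfold TT
    rw [map_st, map_st, rho_fS r f hf, LinearMap.comp_id]
    conv_lhs => enter [2]; rw [e]
    rw [st_assoc _ hco, ← stD_assoc (iH k H A).toLinearMap, st_S, cu_st]
  exact LinearMap.congr_fun key a

theorem TT_right
    (hco : (TensorProduct.assoc k A H H).toLinearMap ∘ₗ rTensor H r.toLinearMap ∘ₗ r.toLinearMap =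
      lTensor A Δ ∘ₗ r.toLinearMap)
    (hcu : (TensorProduct.rid k A).toLinearMap ∘ₗ lTensor A εH ∘ₗ r.toLinearMap = LinearMap.id) :
    st r.toLinearMap (TT r f) f.toLinearMap = LinearMap.id := by
  rw [TT, st_assoc _ hco, S_st, st_cu _ hcu]

theorem mk_comm (ρA : A →ₗ[k] A ⊗[k] H) (a b : A) (hb : b ∈ coinv ρA) :
    (commSub ρA).mkQ (a * b) = (commSub ρA).mkQ (b * a) := by
  rw [← sub_eq_zero, ← map_sub, Submodule.mkQ_apply, Submodule.Quotient.mk_eq_zero]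
  exact Submodule.subset_span ⟨a, b, hb, rfl⟩

/-- `h ↦ (a ↦ f h⑵ * a * f (S h⑴))` -/
def lam : H →ₗ[k] Module.End k A :=
  st Δ ((LinearMap.mul k A).flip ∘ₗ f.toLinearMap ∘ₗ 𝒮) ((LinearMap.mul k A) ∘ₗ f.toLinearMap)

theorem intActL_eq (h : H) (a : A) :
    intActL Δ f.toLinearMap (f.toLinearMap ∘ₗ 𝒮) (h ⊗ₜ[k] a) = lam f h a := by
  simp only [intActL, lam, st, LinearMap.comp_apply, LinearEquiv.coe_coe,
    TensorProduct.comm_tmul, lTensor_tmul]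
  generalize Δ h = s
  induction s with
  | zero => simp
  | add x y hx hy => simp only [map_add, TensorProduct.tmul_add, hx, hy, LinearMap.add_apply]
  | tmul a g => simp [sandwich]

theorem lam_comm (hf : r.toLinearMap ∘ₗ f.toLinearMap = rTensor H f.toLinearMap ∘ₗ Δ)
    (h : H) (a b : A) (hb : b ∈ coinv r.toLinearMap) :
    (commSub r.toLinearMap).mkQ (lam f h (a * b)) =
      (commSub r.toLinearMap).mkQ (lam f h (b * a)) := by
  let P : H ⊗[k] H →ₗ[k] Module.End k A := LinearMap.mul' k _ ∘ₗ TensorProduct.map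
    ((LinearMap.mul k A).flip ∘ₗ f.toLinearMap ∘ₗ 𝒮) ((LinearMap.mul k A) ∘ₗ f.toLinearMap)
  let U : (H ⊗[k] H) ⊗[k] H →ₗ[k] Module.End k A := LinearMap.mul' k _ ∘ₗ TensorProduct.map
    ((LinearMap.mul k A).flip ∘ₗ LinearMap.mul' k A ∘ₗ
      TensorProduct.map (f.toLinearMap ∘ₗ 𝒮) (bp f b))
    ((LinearMap.mul k A) ∘ₗ f.toLinearMap)
  let V : H ⊗[k] (H ⊗[k] H) →ₗ[k] Module.End k A := LinearMap.mul' k _ ∘ₗ TensorProduct.map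
    ((LinearMap.mul k A).flip ∘ₗ f.toLinearMap ∘ₗ 𝒮)
    ((LinearMap.mul k A) ∘ₗ LinearMap.mul' k A ∘ₗ
      TensorProduct.map (bp f b) f.toLinearMap)
  have hU : lam f h (a * b) = U (rTensor H Δ (Δ h)) a := by
    change P (Δ h) (a * b) = _
    generalize Δ h = s
    induction s with
    | zero => simp
    | add x y hx hy => simp only [map_add, hx, hy, LinearMap.add_apply]
    | tmul x y =>
      have := LinearMap.congr_fun (bp_left f b) x
      simp only [st, LinearMap.comp_apply] at this
      simp [U, P, this, mul_assoc]
  have hV : lam f h (b * a) = V (lTensor H Δ (Δ h)) a := by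
    change P (Δ h) (b * a) = _
    generalize Δ h = s
    induction s with
    | zero => simp
    | add x y hx hy => simp only [map_add, hx, hy, LinearMap.add_apply]
    | tmul x y =>
      have := LinearMap.congr_fun (bp_right f b) y
      simp only [st, LinearMap.comp_apply] at this
      simp [V, P, this, mul_assoc]
  have hUV : ∀ t : (H ⊗[k] H) ⊗[k] H, (commSub r.toLinearMap).mkQ (U t a) =
      (commSub r.toLinearMap).mkQ (V (TensorProduct.assoc k H H H t) a) := by
    intro t
    induction t with
    | zero => simp
    | add x y hx hy => simp only [map_add, hx, hy, LinearMap.add_apply]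
    | tmul xy z =>
      induction xy with
      | zero => simp
      | add x y hx hy => simp only [map_add, TensorProduct.add_tmul, hx, hy, LinearMap.add_apply]
      | tmul x y =>
        have := mk_comm r.toLinearMap (f z * a * f (𝒮 x)) (bp f b y) (bp_coinv r f hf b hb y)
        simpa [U, V, mul_assoc] using this
  rw [hU, hV, hUV, Coalgebra.coassoc_apply]

theorem rho_lam (hf : r.toLinearMap ∘ₗ f.toLinearMap = rTensor H f.toLinearMap ∘ₗ Δ)
    (h : H) (a : A) :
    r (lam f h a) =
      st Δ ((LinearMap.mul k (A ⊗[k] H)).flip ∘ₗ (iH k H A).toLinearMap ∘ₗ 𝒮)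
        (st Δ (lam ((iA k H A).comp f))
          (LinearMap.mul k (A ⊗[k] H) ∘ₗ (iH k H A).toLinearMap)) h (r a) := by
  have h1 : r (lam f h a) =
      st Δ ((LinearMap.mul k (A ⊗[k] H)).flip ∘ₗ r.toLinearMap ∘ₗ f.toLinearMap ∘ₗ 𝒮)
        (LinearMap.mul k (A ⊗[k] H) ∘ₗ r.toLinearMap ∘ₗ f.toLinearMap) h (r a) := by
    simp only [lam, st, LinearMap.comp_apply]
    generalize Δ h = s
    induction s with
    | zero => simp
    | add x y hx hy => simp only [map_add, hx, hy, LinearMap.add_apply]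
    | tmul x y => simp
  have h2 : LinearMap.mul k (A ⊗[k] H) ∘ₗ r.toLinearMap ∘ₗ f.toLinearMap =
      st Δ (LinearMap.mul k (A ⊗[k] H) ∘ₗ (iA k H A).toLinearMap ∘ₗ f.toLinearMap)
        (LinearMap.mul k (A ⊗[k] H) ∘ₗ (iH k H A).toLinearMap) := by
    rw [hf, rTensor_st]
    exact map_st (Algebra.lmul k (A ⊗[k] H)) Δ _ _
  have h3 : (LinearMap.mul k (A ⊗[k] H)).flip ∘ₗ r.toLinearMap ∘ₗ f.toLinearMap ∘ₗ 𝒮 =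
      st Δ ((LinearMap.mul k (A ⊗[k] H)).flip ∘ₗ (iH k H A).toLinearMap ∘ₗ 𝒮)
      ((LinearMap.mul k (A ⊗[k] H)).flip ∘ₗ (iA k H A).toLinearMap ∘ₗ f.toLinearMap ∘ₗ 𝒮) := by
    rw [rho_fS r f hf]
    refine LinearMap.ext fun x => ?_
    simp only [st, LinearMap.comp_apply]
    generalize Δ x = s
    induction s with
    | zero => simp
    | add x y hx hy => simp only [map_add, hx, hy]
    | tmul x y =>
      refine LinearMap.ext fun z => ?_
      simp [mul_assoc]
  rw [h1, h2, h3, stD_assoc, ← stD_assoc (_ ∘ₗ (iA k H A).toLinearMap ∘ₗ _)]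
  rfl

theorem lam_iA (h : H) (a : A) (g : H) :
    lam ((iA k H A).comp f) h (a ⊗ₜ[k] g) = lam f h a ⊗ₜ[k] g := by
  simp only [lam, st, LinearMap.comp_apply]
  generalize Δ h = s
  induction s with
  | zero => simp
  | add x y hx hy => simp only [map_add, hx, hy, LinearMap.add_apply, TensorProduct.add_tmul]
  | tmul x y => simp

theorem lam_mul (g h : H) (a : A) : lam f (g * h) a = lam f g (lam f h a) := by
  simp only [lam, st, LinearMap.comp_apply, Bialgebra.comul_mul]
  generalize Δ g = s
  generalize Δ h = t
  induction s with
  | zero => simp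
  | add x y hx hy => simp only [map_add, hx, hy, LinearMap.add_apply, add_mul]
  | tmul x y =>
    induction t with
    | zero => simp
    | add x y hx hy => simp only [map_add, hx, hy, LinearMap.add_apply, mul_add]
    | tmul x y => simp [mul_assoc, HopfAlgebra.antipode_mul_antidistrib]

theorem lam_one (a : A) : lam f (1 : H) a = a := by
  simp [lam, st, Algebra.TensorProduct.one_def]

end helpers

set_option maxHeartbeats 2000000

/-- For a total integral `f : H → A` which is an algebra map (with convolution
inverse `f ∘ 𝒮`), the quotient `A_B = A ⧸ [A,B]` with the induced coaction and the left action
`h · a = f h⑵ * a * f⁻¹ h⑴` is a left-right anti-Yetter-Drinfeld module over `H`; moreover if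
`a₍₀₎ * f⁻¹ (a₍₁₎⑴) * f (a₍₁₎⑵) = a` for all `a` then this module is stable. -/
theorem total_integral_algebra_map_gives_AYD_on_quotient
    (Sinv : H →ₗ[k] H) (hS₁ : Sinv ∘ₗ 𝒮 = LinearMap.id) (hS₂ : 𝒮 ∘ₗ Sinv = LinearMap.id)
    (ρA : A →ₗ[k] A ⊗[k] H)
    (hρ_coassoc : (TensorProduct.assoc k A H H).toLinearMap ∘ₗ rTensor H ρA ∘ₗ ρA =
      lTensor A Δ ∘ₗ ρA)
    (hρ_counit : (TensorProduct.rid k A).toLinearMap ∘ₗ lTensor A εH ∘ₗ ρA = LinearMap.id)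
    (hρ_one : ρA 1 = (1 : A) ⊗ₜ[k] (1 : H))
    (hρ_mul : ∀ x y : A, ρA (x * y) = ρA x * ρA y)
    (f : H →ₗ[k] A) (hf_one : f 1 = 1)
    (hf_comod : ρA ∘ₗ f = rTensor H f ∘ₗ Δ)
    (hf_mul : ∀ x y : H, f (x * y) = f x * f y)
 :
    ∃ actQ : H ⊗[k] (A ⧸ commSub ρA) →ₗ[k] (A ⧸ commSub ρA),
    ∃ ρQ : (A ⧸ commSub ρA) →ₗ[k] (A ⧸ commSub ρA) ⊗[k] H,
      (actQ ∘ₗ lTensor H (commSub ρA).mkQ = (commSub ρA).mkQ ∘ₗ intActL Δ f (f ∘ₗ 𝒮)) ∧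
      (ρQ ∘ₗ (commSub ρA).mkQ = rTensor H (commSub ρA).mkQ ∘ₗ ρA) ∧
      (actQ ∘ₗ rTensor (A ⧸ commSub ρA) mulH =
      actQ ∘ₗ lTensor H (actQ) ∘ₗ (TensorProduct.assoc k H H (A ⧸ commSub ρA)).toLinearMap) ∧
      (∀ x : (A ⧸ commSub ρA), (actQ) ((1 : H) ⊗ₜ[k] x) = x) ∧
      ((TensorProduct.assoc k (A ⧸ commSub ρA) H H).toLinearMap ∘ₗ rTensor H (ρQ) ∘ₗ (ρQ) =
      lTensor (A ⧸ commSub ρA) Δ ∘ₗ (ρQ)) ∧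
      ((TensorProduct.rid k (A ⧸ commSub ρA)).toLinearMap ∘ₗ lTensor (A ⧸ commSub ρA) εH ∘ₗ (ρQ) = LinearMap.id) ∧
      (ρQ ∘ₗ actQ = aydLRRhs mulH Δ 𝒮 actQ ρQ) ∧
      ((∀ a : A, mulA (lTensor A (mulA ∘ₗ TensorProduct.map (f ∘ₗ 𝒮) f ∘ₗ Δ) (ρA a)) = a) →
        actQ ∘ₗ (TensorProduct.comm k (A ⧸ commSub ρA) H).toLinearMap ∘ₗ ρQ = LinearMap.id) := by
  obtain ⟨r, rfl⟩ : ∃ r : A →ₐ[k] A ⊗[k] H, r.toLinearMap = ρA :=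
    ⟨AlgHom.ofLinearMap ρA hρ_one hρ_mul, rfl⟩
  obtain ⟨f, rfl⟩ : ∃ f' : H →ₐ[k] A, f'.toLinearMap = f :=
    ⟨AlgHom.ofLinearMap f hf_one hf_mul, rfl⟩
  let C := commSub r.toLinearMap
  let actQ : H ⊗[k] (A ⧸ C) →ₗ[k] (A ⧸ C) := TensorProduct.lift
    (C.liftQ ((lam f).compr₂ C.mkQ).flip (by
      refine Submodule.span_le.2 ?_
      rintro _ ⟨a, b, hb, rfl⟩
      refine LinearMap.mem_ker.2 (LinearMap.ext fun h => ?_)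
      have := lam_comm r f hf_comod h a b hb
      change C.mkQ (lam f h (a * b - b * a)) = 0
      rw [map_sub, map_sub, sub_eq_zero]
      exact this)).flip
  let ρQ : (A ⧸ C) →ₗ[k] (A ⧸ C) ⊗[k] H := C.liftQ (rTensor H C.mkQ ∘ₗ r.toLinearMap) (by
      refine Submodule.span_le.2 ?_
      rintro _ ⟨a, b, hb, rfl⟩
      refine LinearMap.mem_ker.2 ?_
      have hb' : r b = b ⊗ₜ[k] (1 : H) := hb
      simp only [LinearMap.comp_apply, AlgHom.toLinearMap_apply, map_sub, map_mul, hb']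
      rw [sub_eq_zero]
      generalize r a = s
      induction s with
      | zero => simp
      | add x y hx hy => simp only [map_add, hx, hy, add_mul, mul_add]
      | tmul x y =>
        simp only [Algebra.TensorProduct.tmul_mul_tmul, rTensor_tmul, mul_one, one_mul]
        rw [mk_comm r.toLinearMap x b hb])
  have act_mk : ∀ (h : H) (a : A), actQ (h ⊗ₜ[k] C.mkQ a) = C.mkQ (lam f h a) := fun h a => rfl
  have rho_mk : ∀ a : A, ρQ (C.mkQ a) = rTensor H C.mkQ (r a) := fun a => rfl
  have surj : ∀ x : A ⧸ C, ∃ a, C.mkQ a = x := C.mkQ_surjective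
  refine ⟨actQ, ρQ, ?_, ?_, ?_, ?_, ?_, ?_, ?_, ?_⟩
  · refine TensorProduct.ext' fun h a => ?_
    simp only [LinearMap.comp_apply, lTensor_tmul]
    rw [intActL_eq]
    exact act_mk h a
  · rfl
  · refine TensorProduct.ext' fun gh x => ?_
    obtain ⟨a, rfl⟩ := surj x
    induction gh with
    | zero => simp
    | add x y hx hy => simp only [map_add, hx, hy, TensorProduct.add_tmul]
    | tmul g h =>
      simp only [LinearMap.comp_apply, rTensor_tmul, LinearMap.mul'_apply, LinearEquiv.coe_coe,
        TensorProduct.assoc_tmul, lTensor_tmul, act_mk, lam_mul]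
  · intro x
    obtain ⟨a, rfl⟩ := surj x
    rw [act_mk, lam_one]
  · refine LinearMap.ext fun x => ?_
    obtain ⟨a, rfl⟩ := surj x
    have h1 : TensorProduct.assoc k A H H (rTensor H r.toLinearMap (r a)) = lTensor A Δ (r a) :=
      LinearMap.congr_fun hρ_coassoc a
    have h2 : ∀ t : A ⊗[k] H, rTensor H ρQ (rTensor H C.mkQ t) =
        rTensor H (rTensor H C.mkQ) (rTensor H r.toLinearMap t) := by
      intro t
      induction t with
      | zero => simp
      | add x y hx hy => simp only [map_add, hx, hy]
      | tmul x y => simp only [rTensor_tmul, rho_mk, AlgHom.toLinearMap_apply]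
    have h3 : ∀ t : (A ⊗[k] H) ⊗[k] H,
        TensorProduct.assoc k (A ⧸ C) H H (rTensor H (rTensor H C.mkQ) t) =
        rTensor (H ⊗[k] H) C.mkQ (TensorProduct.assoc k A H H t) := by
      intro t
      induction t with
      | zero => simp
      | add x y hx hy => simp only [map_add, hx, hy]
      | tmul xy z =>
        induction xy with
        | zero => simp
        | add x y hx hy => simp only [map_add, hx, hy, TensorProduct.add_tmul]
        | tmul x y => simp only [rTensor_tmul, TensorProduct.assoc_tmul]
    simp only [LinearMap.comp_apply, LinearEquiv.coe_coe, rho_mk]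
    rw [h2, h3, h1]
    generalize r a = s
    induction s with
    | zero => simp
    | add x y hx hy => simp only [map_add, hx, hy]
    | tmul x y => simp only [rTensor_tmul, lTensor_tmul]
  · refine LinearMap.ext fun x => ?_
    obtain ⟨a, rfl⟩ := surj x
    have h1 : TensorProduct.rid k A (lTensor A εH (r a)) = a :=
      LinearMap.congr_fun hρ_counit a
    simp only [LinearMap.comp_apply, LinearEquiv.coe_coe, rho_mk, LinearMap.id_apply]
    conv_rhs => rw [← h1]
    generalize r a = s
    induction s with
    | zero => simp
    | add x y hx hy => simp only [map_add, hx, hy]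
    | tmul x y => simp only [rTensor_tmul, lTensor_tmul, TensorProduct.rid_tmul, map_smul]
  · refine TensorProduct.ext' fun h x => ?_
    obtain ⟨a, rfl⟩ := surj x
    rw [LinearMap.comp_apply, act_mk, rho_mk, rho_lam r f hf_comod]
    simp only [aydLRRhs, LinearMap.comp_apply, TensorProduct.map_tmul, rho_mk, LinearEquiv.coe_coe]
    have h1 : ∀ (u p w : H →ₗ[k] Module.End k (A ⊗[k] H)), st Δ u (st Δ p w) h =
        LinearMap.mul' k _ (TensorProduct.map u (LinearMap.mul' k _ ∘ₗ TensorProduct.map p w)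
          (lTensor H Δ (Δ h))) := by
      intro u p w
      rw [st]
      simp only [LinearMap.comp_apply]
      generalize Δ h = s
      induction s with
      | zero => simp
      | add x y hx hy => simp only [map_add, hx, hy]
      | tmul x y => simp [st]
    rw [h1]
    generalize lTensor H Δ (Δ h) = s
    generalize r a = t
    induction s with
    | zero => simp
    | add x y hx hy => simp only [map_add, hx, hy, LinearMap.add_apply, TensorProduct.add_tmul]
    | tmul x yz =>
      induction yz with
      | zero => simp
      | add x y hx hy =>
        simp only [map_add, hx, hy, LinearMap.add_apply, TensorProduct.add_tmul,
          TensorProduct.tmul_add]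
      | tmul y z =>
        induction t with
        | zero => simp
        | add x y hx hy =>
          simp only [map_add, hx, hy, TensorProduct.tmul_add]
        | tmul a g =>
          simp only [TensorProduct.map_tmul, LinearMap.comp_apply, LinearMap.mul'_apply,
            Module.End.mul_apply, LinearMap.flip_apply, LinearMap.mul_apply',
            AlgHom.toLinearMap_apply, Algebra.TensorProduct.includeRight_apply,
            Algebra.TensorProduct.tmul_mul_tmul, one_mul, mul_one, lam_iA, rTensor_tmul,
            lTensor_tmul, TensorProduct.comm_tmul, TensorProduct.assoc_tmul,
            TensorProduct.tensorTensorTensorComm_tmul, LinearEquiv.coe_coe, act_mk, mul_assoc]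
  · intro _
    refine LinearMap.ext fun x => ?_
    obtain ⟨a, rfl⟩ := surj x
    simp only [LinearMap.comp_apply, LinearEquiv.coe_coe, rho_mk, LinearMap.id_apply]
    let W : A ⊗[k] (H ⊗[k] H) →ₗ[k] A :=
      sandwich f.toLinearMap (f.toLinearMap ∘ₗ 𝒮) ∘ₗ lTensor A (TensorProduct.comm k H H).toLinearMap
    have h1 : TensorProduct.assoc k A H H (rTensor H r.toLinearMap (r a)) = lTensor A Δ (r a) :=
      LinearMap.congr_fun hρ_coassoc a
    have h2 : ∀ t : A ⊗[k] H, actQ (TensorProduct.comm k (A ⧸ C) H (rTensor H C.mkQ t)) =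
        C.mkQ (W (lTensor A Δ t)) := by
      intro t
      induction t with
      | zero => simp
      | add x y hx hy => simp only [map_add, hx, hy]
      | tmul x y =>
        rw [rTensor_tmul, TensorProduct.comm_tmul, act_mk, ← intActL_eq]
        simp [W, intActL]
    have h3 : ∀ t : A ⊗[k] H,
        C.mkQ (W (TensorProduct.assoc k A H H (rTensor H r.toLinearMap t))) =
        C.mkQ (LinearMap.mul' k A (TensorProduct.map (TT r f) f.toLinearMap t)) := by
      intro t
      induction t with
      | zero => simp
      | add x y hx hy => simp only [map_add, hx, hy]
      | tmul x y =>
        have e : W (TensorProduct.assoc k A H H (rTensor H r.toLinearMap (x ⊗ₜ[k] y))) =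
            f y * TT r f x := by
          simp only [TT, st, rTensor_tmul, LinearMap.comp_apply]
          generalize r.toLinearMap x = s
          induction s with
          | zero => simp
          | add x y hx hy => simp only [map_add, hx, hy, TensorProduct.add_tmul, mul_add]
          | tmul x y => simp [W, sandwich, mul_assoc]
        rw [e]
        exact mk_comm r.toLinearMap (f y) (TT r f x) (TT_coinv r f hρ_coassoc hf_comod x)
    rw [h2, ← h1, h3]
    exact congrArg C.mkQ (LinearMap.congr_fun (TT_right r f hρ_coassoc hρ_counit) a)
end
end

section
/- Let A(B)^H be a cleft Hopf Galois extension with convolution invertible total integral f: H → A. Then the quotient space A_B = A/[A,B], with the coaction induced from the original right H-coaction and the left H-action h·a = f(h(2)) a f^{-1}(h(1)), is a left-right stable anti Yetter–Drinfeld module over H. -/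
open TensorProduct LinearMap

noncomputable section

variable {k H A M : Type*} [Field k] [Ring H] [HopfAlgebra k H]
  [Ring A] [Algebra k A] [AddCommGroup M] [Module k M]

local notation "Δ" => (Coalgebra.comul (R := k) (A := H))
local notation "εH" => (Coalgebra.counit (R := k) (A := H))
local notation "𝒮" => (HopfAlgebra.antipode (R := k) (A := H))
local notation "mulH" => (LinearMap.mul' k H)
local notation "mulA" => (LinearMap.mul' k A)

section Helpers

open WithConv Coalgebra

variable {C C' D D' : Type*} [AddCommGroup C] [Module k C] [Coalgebra k C]
  [AddCommGroup C'] [Module k C'] [Coalgebra k C']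
  [Ring D] [Algebra k D] [Ring D'] [Algebra k D']

/-- Postcomposition with an algebra map is multiplicative for convolution. -/
def cvPush (h : D →ₐ[k] D') : WithConv (C →ₗ[k] D) →* WithConv (C →ₗ[k] D') where
  toFun φ := toConv (h.toLinearMap ∘ₗ φ.ofConv)
  map_one' := by ext c; simp
  map_mul' φ ψ := by rw [LinearMap.algHom_comp_convMul_distrib]

/-- Precomposition with a coalgebra map is multiplicative for convolution. -/
def cvPull (p : C' →ₗc[k] C) : WithConv (C →ₗ[k] D) →* WithConv (C' →ₗ[k] D) where
  toFun φ := toConv (φ.ofConv ∘ₗ p.toLinearMap)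
  map_one' := by ext c; simp
  map_mul' φ ψ := by rw [LinearMap.convMul_comp_coalgHom_distrib]

lemma cvPush_apply (h : D →ₐ[k] D') (φ : WithConv (C →ₗ[k] D)) (c : C) :
    cvPush h φ c = h (φ c) := rfl

lemma cvPull_apply (p : C' →ₗc[k] C) (φ : WithConv (C →ₗ[k] D)) (c : C') :
    cvPull p φ c = φ (p c) := rfl

lemma cvPush_cvPull (h : D →ₐ[k] D') (p : C' →ₗc[k] C) (φ : WithConv (C →ₗ[k] D)) :
    cvPush h (cvPull p φ) = cvPull p (cvPush h φ) := rfl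

/-- The map `c ↦ ε(c) d`. -/
def cvCst (d : D) : WithConv (C →ₗ[k] D) := toConv (toSpanSingleton k D d ∘ₗ counit)

lemma cvCst_apply (d : D) (c : C) : (cvCst d : WithConv (C →ₗ[k] D)) c =
    counit (R := k) c • d := rfl

lemma mul_cvCst_apply (φ : WithConv (C →ₗ[k] D)) (d : D) (c : C) :
    (φ * cvCst (k := k) (C := C) d).ofConv c = φ.ofConv c * d := by
  trans LinearMap.mul' k D (TensorProduct.map φ.ofConv (toSpanSingleton k D d)
    (lTensor C counit (comul c)))
  · rw [LinearMap.convMul_def]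
    simp only [LinearMap.comp_apply]
    generalize comul (R := k) c = u
    induction u using TensorProduct.induction_on with
    | zero => simp
    | tmul x y => simp [cvCst]
    | add x y hx hy => simp only [map_add, hx, hy]
  · simp

lemma cvCst_mul_apply (φ : WithConv (C →ₗ[k] D)) (d : D) (c : C) :
    (cvCst (k := k) (C := C) d * φ).ofConv c = d * φ.ofConv c := by
  trans LinearMap.mul' k D (TensorProduct.map (toSpanSingleton k D d) φ.ofConv
    (rTensor C counit (comul c)))
  · rw [LinearMap.convMul_def]
    simp only [LinearMap.comp_apply]
    generalize comul (R := k) c = u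
    induction u using TensorProduct.induction_on with
    | zero => simp
    | tmul x y => simp [cvCst]
    | add x y hx hy => simp only [map_add, hx, hy]
  · simp

/-- `c ↦ φ c⑵ * d * ψ c⑴`. -/
def cvTw (d : D) (ψ φ : WithConv (C →ₗ[k] D)) : C →ₗ[k] D :=
  LinearMap.mul' k D ∘ₗ TensorProduct.map (LinearMap.mulRight k d ∘ₗ φ.ofConv) ψ.ofConv ∘ₗ
    (TensorProduct.comm k C C).toLinearMap ∘ₗ comul

lemma cvTw_mul_cst (a b : D) (ψ φ : WithConv (C →ₗ[k] D)) :
    cvTw a ψ (φ * cvCst b) = cvTw (b * a) ψ φ := by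
  have : (φ * cvCst b).ofConv = LinearMap.mulRight k b ∘ₗ φ.ofConv := by
    ext c; exact mul_cvCst_apply φ b c
  simp only [cvTw, this, ← LinearMap.comp_assoc]
  congr 4
  ext c; simp [mul_assoc]

lemma cvTw_cst_mul (a b : D) (ψ φ : WithConv (C →ₗ[k] D)) :
    cvTw a (cvCst b * ψ) φ = cvTw (a * b) ψ φ := by
  have : (cvCst b * ψ).ofConv = LinearMap.mulLeft k b ∘ₗ ψ.ofConv := by
    ext c; exact cvCst_mul_apply ψ b c
  simp only [cvTw, this, ← LinearMap.comp_assoc]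
  congr 2
  ext c c'; simp [mul_assoc]

lemma cvTw_push (h : D →ₐ[k] D') (d : D) (ψ φ : WithConv (C →ₗ[k] D)) (c : C) :
    h (cvTw d ψ φ c) = cvTw (h d) (cvPush h ψ) (cvPush h φ) c := by
  simp only [cvTw, LinearMap.comp_apply]
  generalize comul (R := k) c = u
  induction u using TensorProduct.induction_on with
  | zero => simp
  | tmul x y => simp [cvPush]
  | add x y hx hy => simp only [map_add, hx, hy]

lemma cvTw_pull (p : C' →ₗc[k] C) (d : D) (ψ φ : WithConv (C →ₗ[k] D)) (c : C') :
    cvTw d (cvPull p ψ) (cvPull p φ) c = cvTw d ψ φ (p c) := by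
  simp only [cvTw, LinearMap.comp_apply]
  rw [← CoalgHomClass.map_comp_comul_apply]
  generalize comul (R := k) c = u
  induction u using TensorProduct.induction_on with
  | zero => simp
  | tmul x y => simp [cvPull]
  | add x y hx hy => simp only [map_add, hx, hy]

/-- Sliding lemma. -/
lemma cvTw_slide (Q : Submodule k D) (a : D) (ψ U φ : WithConv (C →ₗ[k] D))
    (hU : ∀ c x, Q.mkQ (U c * x) = Q.mkQ (x * U c)) (c : C) :
    Q.mkQ (cvTw a ψ (U * φ) c) = Q.mkQ (cvTw a (ψ * U) φ c) := by
  let R : (C ⊗[k] C) ⊗[k] C →ₗ[k] D :=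
    LinearMap.mul' k D ∘ₗ TensorProduct.map (LinearMap.mulRight k a ∘ₗ φ.ofConv)
      (LinearMap.mul' k D ∘ₗ TensorProduct.map ψ.ofConv U.ofConv) ∘ₗ
    (TensorProduct.comm k (C ⊗[k] C) C).toLinearMap
  let L : C ⊗[k] (C ⊗[k] C) →ₗ[k] D :=
    LinearMap.mul' k D ∘ₗ TensorProduct.map (LinearMap.mulRight k a ∘ₗ
      (LinearMap.mul' k D ∘ₗ TensorProduct.map U.ofConv φ.ofConv)) ψ.ofConv ∘ₗ
    (TensorProduct.comm k C (C ⊗[k] C)).toLinearMap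
  have h1 : cvTw a ψ (U * φ) c = L (lTensor C comul (comul c)) := by
    simp only [cvTw, L, LinearMap.comp_apply]
    generalize comul (R := k) c = u
    induction u using TensorProduct.induction_on with
    | zero => simp
    | tmul x y => simp [LinearMap.convMul_def]
    | add x y hx hy => simp only [map_add, hx, hy]
  have h2 : cvTw a (ψ * U) φ c = R (rTensor C comul (comul c)) := by
    simp only [cvTw, R, LinearMap.comp_apply]
    generalize comul (R := k) c = u
    induction u using TensorProduct.induction_on with
    | zero => simp
    | tmul x y => simp [LinearMap.convMul_def]
    | add x y hx hy => simp only [map_add, hx, hy]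
  have h3 : Q.mkQ ∘ₗ L ∘ₗ (TensorProduct.assoc k C C C).toLinearMap = Q.mkQ ∘ₗ R := by
    ext x y z
    have := hU y (φ z * a * ψ x)
    simpa [L, R, mul_assoc] using this
  rw [h1, h2, ← coassoc_apply]
  exact LinearMap.congr_fun h3 _

/-- First projection `H ⊗ H → H` as a coalgebra map. -/
def cvP1 : H ⊗[k] H →ₗc[k] H :=
  (Coalgebra.TensorProduct.rid k k H).toCoalgHom.comp
    (Coalgebra.TensorProduct.map (CoalgHom.id k H) (Coalgebra.counitCoalgHom k H))

/-- Second projection `H ⊗ H → H` as a coalgebra map. -/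
def cvP2 : H ⊗[k] H →ₗc[k] H :=
  (Coalgebra.TensorProduct.lid k H).toCoalgHom.comp
    (Coalgebra.TensorProduct.map (Coalgebra.counitCoalgHom k H) (CoalgHom.id k H))

lemma cvP1_tmul (x y : H) : (cvP1 (x ⊗ₜ[k] y) : H) = counit (R := k) y • x := rfl

lemma cvP2_tmul (x y : H) : (cvP2 (x ⊗ₜ[k] y) : H) = counit (R := k) x • y := rfl

lemma cvP12 (φ ψ : WithConv (H →ₗ[k] D)) (x y : H) :
    (cvPull cvP1 φ * cvPull cvP2 ψ) (x ⊗ₜ[k] y) = φ x * ψ y := by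
  have hx : φ x = (φ * cvCst (k := k) (C := H) 1).ofConv x := by rw [mul_cvCst_apply, mul_one]
  have hy : ψ y = (cvCst (k := k) (C := H) 1 * ψ).ofConv y := by rw [cvCst_mul_apply, one_mul]
  rw [hx, hy]
  simp only [LinearMap.convMul_def, LinearMap.comp_apply, TensorProduct.comul_tmul]
  generalize comul (R := k) x = u
  generalize comul (R := k) y = v
  induction u using TensorProduct.induction_on with
  | zero => simp
  | add x y hx hy => simp only [map_add, hx, hy, add_mul, TensorProduct.add_tmul]
  | tmul x x' =>
    induction v using TensorProduct.induction_on with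
    | zero => simp
    | add x y hx hy => simp only [map_add, hx, hy, mul_add, TensorProduct.tmul_add]
    | tmul y y' =>
      simp [cvPull, cvP1_tmul, cvP2_tmul, cvCst, smul_smul, mul_comm]

lemma cvP21 (φ ψ : WithConv (H →ₗ[k] D)) (x y : H) :
    (cvPull cvP2 ψ * cvPull cvP1 φ) (x ⊗ₜ[k] y) = ψ y * φ x := by
  have hx : φ x = (cvCst (k := k) (C := H) 1 * φ).ofConv x := by rw [cvCst_mul_apply, one_mul]
  have hy : ψ y = (ψ * cvCst (k := k) (C := H) 1).ofConv y := by rw [mul_cvCst_apply, mul_one]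
  rw [hx, hy]
  simp only [LinearMap.convMul_def, LinearMap.comp_apply, TensorProduct.comul_tmul]
  generalize comul (R := k) x = u
  generalize comul (R := k) y = v
  induction u using TensorProduct.induction_on with
  | zero => simp
  | add x y hx hy => simp only [map_add, hx, hy, mul_add, TensorProduct.add_tmul]
  | tmul x x' =>
    induction v using TensorProduct.induction_on with
    | zero => simp
    | add x y hx hy => simp only [map_add, hx, hy, add_mul, TensorProduct.tmul_add]
    | tmul y y' =>
      simp [cvPull, cvP1_tmul, cvP2_tmul, cvCst, smul_smul, mul_comm]

lemma cvTw_tmul (a : D) (g f : WithConv (H →ₗ[k] D)) (x y : H) :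
    cvTw a (cvPull cvP2 g * cvPull cvP1 g) (cvPull cvP1 f * cvPull cvP2 f) (x ⊗ₜ[k] y) =
      cvTw (cvTw a g f y) g f x := by
  simp only [cvTw, LinearMap.comp_apply, TensorProduct.comul_tmul]
  generalize comul (R := k) x = u
  generalize comul (R := k) y = v
  have h12 := fun x y => cvP12 f f x y
  have h21 := fun x y => cvP21 g g x y
  generalize (cvPull cvP2 g * cvPull cvP1 g : WithConv (H ⊗[k] H →ₗ[k] D)) = G at *
  generalize (cvPull cvP1 f * cvPull cvP2 f : WithConv (H ⊗[k] H →ₗ[k] D)) = F at *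
  induction u using TensorProduct.induction_on with
  | zero => simp
  | add x y hx hy => simp only [map_add, hx, hy, TensorProduct.add_tmul]
  | tmul x x' =>
    induction v using TensorProduct.induction_on with
    | zero => simp
    | add x y hx hy =>
      simp only [map_add, TensorProduct.tmul_add, hx, hy]
      simp [mul_add, add_mul]
    | tmul y y' =>
      simp [h12, h21, mul_assoc]

/-- Comparison of the two ways to expand the coaction of a sandwiched pure tensor. -/
lemma cvTw_ayd (a : A) (t : H) (g f : WithConv (H →ₗ[k] A)) (h : H) :
    cvTw (a ⊗ₜ[k] t)
      (cvPush (Algebra.TensorProduct.includeRight : H →ₐ[k] A ⊗[k] H) (toConv 𝒮) *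
        cvPush Algebra.TensorProduct.includeLeft g)
      (cvPush Algebra.TensorProduct.includeLeft f *
        cvPush (Algebra.TensorProduct.includeRight : H →ₐ[k] A ⊗[k] H) (toConv LinearMap.id)) h =
    TensorProduct.map (cvTw a g f) (mulH ∘ₗ TensorProduct.map LinearMap.id
      (LinearMap.mulLeft k t ∘ₗ 𝒮))
      (TensorProduct.assoc k H H H (TensorProduct.comm k H (H ⊗[k] H) (lTensor H Δ (Δ h)))) := by
  let K : H ⊗[k] (H ⊗[k] (H ⊗[k] H)) →ₗ[k] A ⊗[k] H :=
    TensorProduct.map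
      (mulA ∘ₗ TensorProduct.map (LinearMap.mulRight k a ∘ₗ f.ofConv) g.ofConv ∘ₗ
        (TensorProduct.comm k H H).toLinearMap)
      (mulH ∘ₗ TensorProduct.map LinearMap.id (LinearMap.mulLeft k t ∘ₗ 𝒮)) ∘ₗ
    (TensorProduct.assoc k (H ⊗[k] H) H H).toLinearMap ∘ₗ
    rTensor H (TensorProduct.assoc k H H H).symm.toLinearMap ∘ₗ
    (TensorProduct.comm k H (H ⊗[k] (H ⊗[k] H))).toLinearMap
  trans K (lTensor H (lTensor H Δ) (TensorProduct.assoc k H H H (rTensor H Δ (Δ h))))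
  · simp only [cvTw, LinearMap.comp_apply]
    generalize Δ h = w
    induction w using TensorProduct.induction_on with
    | zero => simp
    | add x y hx hy => simp only [map_add, hx, hy]
    | tmul p q =>
      simp only [LinearEquiv.coe_coe, TensorProduct.comm_tmul, TensorProduct.map_tmul,
        rTensor_tmul, LinearMap.comp_apply, LinearMap.convMul_def, LinearMap.mul'_apply]
      generalize Δ p = u
      have e : lTensor H (lTensor H Δ) (TensorProduct.assoc k H H H (u ⊗ₜ[k] q)) =
          TensorProduct.assoc k H H (H ⊗[k] H) (u ⊗ₜ[k] Δ q) := by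
        induction u using TensorProduct.induction_on with
        | zero => simp
        | add x y hx hy => simp only [map_add, hx, hy, TensorProduct.add_tmul]
        | tmul x y => simp
      rw [e]
      clear e
      generalize Δ q = v
      induction u using TensorProduct.induction_on with
      | zero => simp
      | add x y hx hy => simp only [map_add, TensorProduct.add_tmul, mul_add, hx, hy]
      | tmul x x' =>
        induction v using TensorProduct.induction_on with
        | zero => simp
        | add x y hx hy => simp only [map_add, TensorProduct.tmul_add, add_mul, hx, hy]
        | tmul y y' => simp [K, cvPush, mul_assoc]
  · rw [coassoc_apply]
    have e : ∀ w : H ⊗[k] H, lTensor H (lTensor H Δ) (lTensor H Δ w) =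
        lTensor H (TensorProduct.assoc k H H H).toLinearMap
          (lTensor H (rTensor H Δ) (lTensor H Δ w)) := by
      intro w
      simp only [← LinearMap.comp_apply, ← LinearMap.lTensor_comp]
      rw [coassoc]
    rw [e]
    generalize lTensor H Δ (Δ h) = w
    induction w using TensorProduct.induction_on with
    | zero => simp
    | add x y hx hy => simp only [map_add, hx, hy]
    | tmul p w =>
      induction w using TensorProduct.induction_on with
      | zero => simp
      | add x y hx hy => simp only [map_add, hx, hy, TensorProduct.tmul_add]
      | tmul q r =>
        simp only [lTensor_tmul, rTensor_tmul, cvTw, LinearMap.comp_apply, LinearEquiv.coe_coe,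
          TensorProduct.comm_tmul, TensorProduct.assoc_tmul, TensorProduct.map_tmul]
        generalize Δ q = u
        induction u using TensorProduct.induction_on with
        | zero => simp
        | add x y hx hy => simp only [map_add, hx, hy, TensorProduct.tmul_add,
            TensorProduct.add_tmul]
        | tmul x y => simp [K]

/-- `a ↦ j a₍₀₎ * φ a₍₁₎`. -/
def cvStar (ρA : A →ₗ[k] A ⊗[k] H) (j : A →ₗ[k] D) (φ : WithConv (H →ₗ[k] D)) : A →ₗ[k] D :=
  LinearMap.mul' k D ∘ₗ TensorProduct.map j φ.ofConv ∘ₗ ρA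

lemma cvStar_star (ρA : A →ₗ[k] A ⊗[k] H)
    (hρ_coassoc : (TensorProduct.assoc k A H H).toLinearMap ∘ₗ rTensor H ρA ∘ₗ ρA =
      lTensor A Δ ∘ₗ ρA) (j : A →ₗ[k] D) (φ ψ : WithConv (H →ₗ[k] D)) :
    cvStar ρA (cvStar ρA j φ) ψ = cvStar ρA j (φ * ψ) := by
  trans LinearMap.mul' k D ∘ₗ TensorProduct.map j (LinearMap.mul' k D ∘ₗ
    TensorProduct.map φ.ofConv ψ.ofConv) ∘ₗ
      ((TensorProduct.assoc k A H H).toLinearMap ∘ₗ rTensor H ρA ∘ₗ ρA)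
  · ext a
    simp only [cvStar, LinearMap.comp_apply]
    generalize ρA a = u
    induction u using TensorProduct.induction_on with
    | zero => simp
    | add x y hx hy => simp only [map_add, hx, hy]
    | tmul x y =>
      simp only [rTensor_tmul, TensorProduct.map_tmul, LinearMap.comp_apply]
      generalize ρA x = v
      induction v using TensorProduct.induction_on with
      | zero => simp
      | add x y hx hy =>
        simp only [map_add, TensorProduct.add_tmul, hx, hy]
      | tmul x y => simp [mul_assoc]
  · rw [hρ_coassoc]
    ext a
    simp only [cvStar, LinearMap.comp_apply]
    generalize ρA a = u
    induction u using TensorProduct.induction_on with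
    | zero => simp
    | add x y hx hy => simp only [map_add, hx, hy]
    | tmul x y => simp [LinearMap.convMul_def]

lemma cvStar_one (ρA : A →ₗ[k] A ⊗[k] H)
    (hρ_counit : (TensorProduct.rid k A).toLinearMap ∘ₗ lTensor A εH ∘ₗ ρA = LinearMap.id)
    (j : A →ₗ[k] D) : cvStar ρA j 1 = j := by
  ext a
  conv_rhs => rw [← LinearMap.id_apply (R := k) a, ← hρ_counit]
  simp only [cvStar, LinearMap.comp_apply]
  generalize ρA a = u
  induction u using TensorProduct.induction_on with
  | zero => simp
  | add x y hx hy => simp only [map_add, hx, hy]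
  | tmul x y => simp [LinearMap.convOne_def, Algebra.algebraMap_eq_smul_one]

lemma cvStar_push (ρA : A →ₗ[k] A ⊗[k] H) (h : D →ₐ[k] D') (j : A →ₗ[k] D)
    (φ : WithConv (H →ₗ[k] D)) :
    h.toLinearMap ∘ₗ cvStar ρA j φ = cvStar ρA (h.toLinearMap ∘ₗ j) (cvPush h φ) := by
  ext a
  simp only [cvStar, LinearMap.comp_apply]
  generalize ρA a = u
  induction u using TensorProduct.induction_on with
  | zero => simp
  | add x y hx hy => simp only [map_add, hx, hy]
  | tmul x y => simp [cvPush]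

lemma intActL_tmul (f g : H →ₗ[k] A) (h : H) (a : A) :
    intActL Δ f g (h ⊗ₜ[k] a) = cvTw a (toConv g) (toConv f) h := by
  simp only [intActL, sandwich, cvTw, LinearMap.comp_apply, LinearEquiv.coe_coe,
    TensorProduct.comm_tmul, lTensor_tmul]
  generalize Δ h = u
  induction u using TensorProduct.induction_on with
  | zero => simp
  | add x y hx hy => simp only [map_add, hx, hy, TensorProduct.tmul_add]
  | tmul x y => simp

end Helpers

set_option maxHeartbeats 4000000

/-- For a cleft Hopf Galois extension `A(B)^H` with convolution invertible
total integral `f`, the quotient `A_B = A ⧸ [A,B]` with the induced coaction and the left action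
`h · a = f h⑵ * a * f⁻¹ h⑴` is a left-right **stable** anti-Yetter-Drinfeld module over `H`. -/
theorem cleft_extension_gives_SAYD_on_quotient
    (Sinv : H →ₗ[k] H) (hS₁ : Sinv ∘ₗ 𝒮 = LinearMap.id) (hS₂ : 𝒮 ∘ₗ Sinv = LinearMap.id)
    (ρA : A →ₗ[k] A ⊗[k] H)
    (hρ_coassoc : (TensorProduct.assoc k A H H).toLinearMap ∘ₗ rTensor H ρA ∘ₗ ρA =
      lTensor A Δ ∘ₗ ρA)
    (hρ_counit : (TensorProduct.rid k A).toLinearMap ∘ₗ lTensor A εH ∘ₗ ρA = LinearMap.id)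
    (hρ_one : ρA 1 = (1 : A) ⊗ₜ[k] (1 : H))
    (hρ_mul : ∀ x y : A, ρA (x * y) = ρA x * ρA y)
    (hGal_surj : Function.Surjective (canMap ρA))
    (hGal_ker : LinearMap.ker (canMap ρA) = galRel ρA)
    (f : H →ₗ[k] A) (hf_one : f 1 = 1)
    (hf_comod : ρA ∘ₗ f = rTensor H f ∘ₗ Δ)
    (fInv : H →ₗ[k] A)
    (hconv₁ : mulA ∘ₗ TensorProduct.map fInv f ∘ₗ Δ = Algebra.linearMap k A ∘ₗ εH)
    (hconv₂ : mulA ∘ₗ TensorProduct.map f fInv ∘ₗ Δ = Algebra.linearMap k A ∘ₗ εH)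
 :
    ∃ actQ : H ⊗[k] (A ⧸ commSub ρA) →ₗ[k] (A ⧸ commSub ρA),
    ∃ ρQ : (A ⧸ commSub ρA) →ₗ[k] (A ⧸ commSub ρA) ⊗[k] H,
      (actQ ∘ₗ lTensor H (commSub ρA).mkQ = (commSub ρA).mkQ ∘ₗ intActL Δ f fInv) ∧
      (ρQ ∘ₗ (commSub ρA).mkQ = rTensor H (commSub ρA).mkQ ∘ₗ ρA) ∧
      (actQ ∘ₗ rTensor (A ⧸ commSub ρA) mulH =
      actQ ∘ₗ lTensor H (actQ) ∘ₗ (TensorProduct.assoc k H H (A ⧸ commSub ρA)).toLinearMap) ∧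
      (∀ x : (A ⧸ commSub ρA), (actQ) ((1 : H) ⊗ₜ[k] x) = x) ∧
      ((TensorProduct.assoc k (A ⧸ commSub ρA) H H).toLinearMap ∘ₗ rTensor H (ρQ) ∘ₗ (ρQ) =
      lTensor (A ⧸ commSub ρA) Δ ∘ₗ (ρQ)) ∧
      ((TensorProduct.rid k (A ⧸ commSub ρA)).toLinearMap ∘ₗ lTensor (A ⧸ commSub ρA) εH ∘ₗ (ρQ) = LinearMap.id) ∧
      (ρQ ∘ₗ actQ = aydLRRhs mulH Δ 𝒮 actQ ρQ) ∧
      (actQ ∘ₗ (TensorProduct.comm k (A ⧸ commSub ρA) H).toLinearMap ∘ₗ ρQ = LinearMap.id) := by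
  classical
  have fe : ∃ F : WithConv (H →ₗ[k] A), F = WithConv.toConv f := ⟨_, rfl⟩
  have ge : ∃ G : WithConv (H →ₗ[k] A), G = WithConv.toConv fInv := ⟨_, rfl⟩
  obtain ⟨F, hF⟩ := fe
  obtain ⟨G, hG⟩ := ge
  have hGF : G * F = 1 := by
    rw [hF, hG, LinearMap.convMul_def, LinearMap.convOne_def]
    exact congrArg _ hconv₁
  have hFG : F * G = 1 := by
    rw [hF, hG, LinearMap.convMul_def, LinearMap.convOne_def]
    exact congrArg _ hconv₂
  let R : A →ₐ[k] A ⊗[k] H := AlgHom.ofLinearMap ρA hρ_one hρ_mul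
  have hR : R.toLinearMap = ρA := rfl
  have hRa : ∀ a, R a = ρA a := fun _ => rfl
  let iA : A →ₐ[k] A ⊗[k] H := Algebra.TensorProduct.includeLeft
  let iH : H →ₐ[k] A ⊗[k] H := Algebra.TensorProduct.includeRight
  let I : WithConv (H →ₗ[k] H) := WithConv.toConv LinearMap.id
  let S : WithConv (H →ₗ[k] H) := WithConv.toConv 𝒮
  have hIS : I * S = 1 := LinearMap.id_mul_antipode
  have hSI : S * I = 1 := LinearMap.antipode_mul_id
  have hISp : cvPush iH I * cvPush iH S = 1 := by rw [← map_mul, hIS, map_one]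
  have hFGp : cvPush iA F * cvPush iA G = 1 := by rw [← map_mul, hFG, map_one]
  have F1 : cvPush R F = cvPush iA F * cvPush iH I := by
    apply WithConv.ofConv_injective
    change ρA ∘ₗ F.ofConv = _
    rw [hF]
    change ρA ∘ₗ f = _
    rw [hf_comod, LinearMap.convMul_def]
    ext h
    simp only [LinearMap.comp_apply]
    generalize Δ h = u
    induction u using TensorProduct.induction_on with
    | zero => simp
    | add x y hx hy => simp only [map_add, hx, hy]
    | tmul x y => simp [cvPush, iA, iH, I]
  have F2 : cvPush R G = cvPush iH S * cvPush iA G := by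
    refine left_inv_eq_right_inv (a := cvPush R F) (by rw [← map_mul, hGF, map_one]) ?_
    rw [F1, mul_assoc, ← mul_assoc (cvPush iH I), hISp, one_mul, hFGp]
  -- values in coinvariants
  have hcomm : ∀ b ∈ coinv ρA, ∀ x, (commSub ρA).mkQ (b * x) = (commSub ρA).mkQ (x * b) := by
    intro b hb x
    rw [← sub_eq_zero, ← map_sub, ← neg_eq_zero, ← map_neg, neg_sub]
    simp only [Submodule.mkQ_apply, Submodule.Quotient.mk_eq_zero]
    exact Submodule.subset_span ⟨x, b, hb, rfl⟩
  -- first coinvariance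
  have U1 : ∀ b ∈ coinv ρA, ∀ c, (F * cvCst b * G).ofConv c ∈ coinv ρA := by
    intro b hb c
    have h1 : cvPush R (cvCst b : WithConv (H →ₗ[k] A)) = cvPush iA (cvCst b) := by
      ext c
      have : ρA b = b ⊗ₜ[k] 1 := hb
      simp [cvPush, cvCst, iA, hRa, this, TensorProduct.smul_tmul']
    have h2 : cvPush iH I * cvPush iA (cvCst b : WithConv (H →ₗ[k] A)) =
        cvPush iA (cvCst b) * cvPush iH I := by
      have e : cvPush iA (cvCst b : WithConv (H →ₗ[k] A)) = cvCst (b ⊗ₜ[k] 1) := by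
        ext c
        simp [cvPush, cvCst, iA, TensorProduct.smul_tmul']
      rw [e]
      apply WithConv.ofConv_injective
      ext c
      rw [mul_cvCst_apply, cvCst_mul_apply]
      simp [cvPush, iH, I]
    have h3 : cvPush R (F * cvCst b * G) = cvPush iA (F * cvCst b * G) := by
      rw [map_mul, map_mul, F1, F2, h1, mul_assoc (cvPush iA F), h2, mul_assoc, mul_assoc,
        mul_assoc, ← mul_assoc (cvPush iH I), hISp, one_mul, map_mul, map_mul]
    exact LinearMap.congr_fun (congrArg WithConv.ofConv h3) c
  -- the cocycle
  let μ : H ⊗[k] H →ₗc[k] H := Bialgebra.mulCoalgHom k H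
  let σ : WithConv (H ⊗[k] H →ₗ[k] A) := cvPull cvP1 F * cvPull cvP2 F * cvPull μ G
  have U2 : ∀ c, σ.ofConv c ∈ coinv ρA := by
    intro c
    have h2 : cvPull cvP1 (cvPush iH I) * cvPull cvP2 (cvPush iA F) =
        cvPull cvP2 (cvPush iA F) * cvPull cvP1 (cvPush iH I) := by
      apply WithConv.ofConv_injective
      apply TensorProduct.ext'
      intro x y
      rw [cvP12, cvP21]
      simp [cvPush, iH, iA, I]
    have h4 : cvPull cvP1 (cvPush iH I) * cvPull cvP2 (cvPush iH I) = cvPull μ (cvPush iH I) := by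
      apply WithConv.ofConv_injective
      apply TensorProduct.ext'
      intro x y
      rw [cvP12]
      simp [cvPush, cvPull, iH, I, μ]
    have h5 : cvPull μ (cvPush iH I) * cvPull μ (cvPush iH S) = 1 := by
      rw [← map_mul, hISp, map_one]
    have h3 : cvPush R σ = cvPush iA σ := by
      simp only [σ, map_mul, cvPush_cvPull, F1, F2]
      calc _ = cvPull cvP1 (cvPush iA F) * (cvPull cvP1 (cvPush iH I) *
            cvPull cvP2 (cvPush iA F)) * cvPull cvP2 (cvPush iH I) *
            (cvPull μ (cvPush iH S) * cvPull μ (cvPush iA G)) := by simp only [mul_assoc]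
        _ = cvPull cvP1 (cvPush iA F) * cvPull cvP2 (cvPush iA F) *
            ((cvPull cvP1 (cvPush iH I) * cvPull cvP2 (cvPush iH I)) * cvPull μ (cvPush iH S)) *
              cvPull μ (cvPush iA G) := by rw [h2]; simp only [mul_assoc]
        _ = _ := by rw [h4, h5, mul_one]
    exact LinearMap.congr_fun (congrArg WithConv.ofConv h3) c
  -- well-definedness of the action
  let act0 : A →ₗ[k] H →ₗ[k] (A ⧸ commSub ρA) :=
    (TensorProduct.curry ((commSub ρA).mkQ ∘ₗ intActL Δ f fInv)).flip
  have hact0 : ∀ a h, act0 a h = (commSub ρA).mkQ (cvTw a G F h) := by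
    intro a h
    rw [hF, hG, ← intActL_tmul]; rfl
  have hker : commSub ρA ≤ LinearMap.ker act0 := by
    refine Submodule.span_le.2 ?_
    rintro _ ⟨a, b, hb, rfl⟩
    rw [SetLike.mem_coe, LinearMap.mem_ker, map_sub, sub_eq_zero]
    ext h
    rw [hact0, hact0, ← cvTw_mul_cst a b, ← cvTw_cst_mul a b]
    have e1 : F * cvCst b = (F * cvCst b * G) * F := by rw [mul_assoc, hGF, mul_one]
    have e2 : cvCst b * G = G * (F * cvCst b * G) := by
      rw [← mul_assoc, ← mul_assoc, hGF, one_mul]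
    rw [e1, e2]
    exact (cvTw_slide _ a G _ F (fun c x => hcomm _ (U1 b hb c) x) h).symm
  let actQ : H ⊗[k] (A ⧸ commSub ρA) →ₗ[k] (A ⧸ commSub ρA) :=
    TensorProduct.lift ((commSub ρA).liftQ act0 hker).flip
  have hactQ : ∀ h a, actQ (h ⊗ₜ (commSub ρA).mkQ a) = (commSub ρA).mkQ (cvTw a G F h) := by
    intro h a
    rw [← hact0]
    simp [actQ]
  -- well-definedness of the coaction
  have hker2 : commSub ρA ≤ LinearMap.ker (rTensor H (commSub ρA).mkQ ∘ₗ ρA) := by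
    refine Submodule.span_le.2 ?_
    rintro _ ⟨a, b, hb, rfl⟩
    rw [SetLike.mem_coe, LinearMap.mem_ker, map_sub, sub_eq_zero]
    have hb' : ρA b = b ⊗ₜ[k] 1 := hb
    simp only [LinearMap.comp_apply, hρ_mul, hb']
    generalize ρA a = u
    induction u using TensorProduct.induction_on with
    | zero => simp
    | add x y hx hy => simp only [map_add, hx, hy, add_mul, mul_add]
    | tmul x y =>
      simp only [Algebra.TensorProduct.tmul_mul_tmul, rTensor_tmul, hcomm b hb, mul_one, one_mul]
  let ρQ : (A ⧸ commSub ρA) →ₗ[k] (A ⧸ commSub ρA) ⊗[k] H := (commSub ρA).liftQ _ hker2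
  have hρQ : ∀ a, ρQ ((commSub ρA).mkQ a) = rTensor H (commSub ρA).mkQ (ρA a) := by
    intro a
    simp [ρQ]
  have hsurj : Function.Surjective (commSub ρA).mkQ := Submodule.mkQ_surjective _
  refine ⟨actQ, ρQ, ?_, ?_, ?_, ?_, ?_, ?_, ?_, ?_⟩
  · apply TensorProduct.ext'
    intro h a
    simp only [LinearMap.comp_apply, lTensor_tmul]
    rw [hactQ, intActL_tmul, hF, hG]
  · ext a
    exact hρQ a
  · apply TensorProduct.ext_threefold
    intro h h' x
    obtain ⟨a, rfl⟩ := hsurj x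
    simp only [LinearMap.comp_apply, rTensor_tmul, lTensor_tmul, LinearEquiv.coe_coe,
      TensorProduct.assoc_tmul, hactQ, LinearMap.mul'_apply]
    have e1 : cvPull cvP1 F * cvPull cvP2 F = σ * cvPull μ F := by
      simp only [σ]
      rw [mul_assoc _ _ (cvPull μ F), ← map_mul, hGF, map_one, mul_one]
    have e0 : cvPull cvP2 G * cvPull cvP1 G * (cvPull cvP1 F * cvPull cvP2 F) = 1 := by
      rw [mul_assoc, ← mul_assoc (cvPull cvP1 G), ← map_mul, hGF, map_one, one_mul, ← map_mul,
        hGF, map_one]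
    have e2 : cvPull cvP2 G * cvPull cvP1 G * σ = cvPull μ G := by
      simp only [σ]
      rw [← mul_assoc, e0, one_mul]
    rw [← cvTw_tmul, e1, cvTw_slide _ a _ σ _ (fun c x => hcomm _ (U2 c) x), e2, cvTw_pull]
    rfl
  · intro x
    obtain ⟨a, rfl⟩ := hsurj x
    rw [hactQ]
    congr 1
    have hg1 : fInv 1 = 1 := by
      have := LinearMap.congr_fun hconv₁ 1
      simpa [Bialgebra.comul_one, Algebra.TensorProduct.one_def, hf_one] using this
    simp [cvTw, hF, hG, Bialgebra.comul_one, Algebra.TensorProduct.one_def, hf_one, hg1]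
  · ext a
    simp only [LinearMap.comp_apply, hρQ]
    have := LinearMap.congr_fun hρ_coassoc a
    simp only [LinearMap.comp_apply] at this
    trans rTensor (H ⊗[k] H) (commSub ρA).mkQ
      ((TensorProduct.assoc k A H H).toLinearMap (rTensor H ρA (ρA a)))
    · generalize ρA a = u
      induction u using TensorProduct.induction_on with
      | zero => simp
      | add x y hx hy => simp only [map_add, hx, hy]
      | tmul x y =>
        simp only [rTensor_tmul, hρQ]
        generalize ρA x = v
        induction v using TensorProduct.induction_on with
        | zero => simp
        | add x y hx hy => simp only [map_add, hx, hy, TensorProduct.add_tmul]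
        | tmul x y => simp
    · rw [this]
      generalize ρA a = u
      induction u using TensorProduct.induction_on with
      | zero => simp
      | add x y hx hy => simp only [map_add, hx, hy]
      | tmul x y => simp
  · ext a
    simp only [LinearMap.comp_apply, hρQ]
    conv_rhs => rw [← LinearMap.id_apply (R := k) a, ← hρ_counit]
    simp only [LinearMap.comp_apply, LinearMap.id_apply]
    generalize ρA a = u
    induction u using TensorProduct.induction_on with
    | zero => simp
    | add x y hx hy => simp only [map_add, hx, hy]
    | tmul x y => simp
  · apply TensorProduct.ext'
    intro h x
    obtain ⟨a, rfl⟩ := hsurj x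
    simp only [LinearMap.comp_apply, hactQ, hρQ]
    rw [← hRa, cvTw_push, F1, F2]
    simp only [aydLRRhs, LinearMap.comp_apply, TensorProduct.map_tmul, hρQ, hRa]
    generalize ρA a = u
    induction u using TensorProduct.induction_on with
    | zero => simp [cvTw]
    | add x y hx hy =>
      simp only [map_add, TensorProduct.tmul_add, ← hx, ← hy]
      rw [← map_add]
      congr 1
      simp only [cvTw, LinearMap.comp_apply]
      generalize Δ h = w
      induction w using TensorProduct.induction_on with
      | zero => simp
      | add x y hx hy =>
        simp only [map_add, hx, hy]
        abel
      | tmul x y => simp [mul_add, add_mul]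
    | tmul a t =>
      rw [cvTw_ayd]
      generalize lTensor H Δ (Δ h) = w
      induction w using TensorProduct.induction_on with
      | zero => simp
      | add x y hx hy => simp only [map_add, hx, hy, TensorProduct.add_tmul]
      | tmul p w =>
        induction w using TensorProduct.induction_on with
        | zero => simp
        | add x y hx hy => simp only [map_add, hx, hy, TensorProduct.add_tmul,
            TensorProduct.tmul_add]
        | tmul q r =>
          have := hactQ q a
          simp only [Submodule.mkQ_apply] at this
          simp [this]
  · ext a
    have hρstar : ρA = cvStar ρA iA.toLinearMap (cvPush iH I) := by
      ext a
      simp only [cvStar, LinearMap.comp_apply]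
      generalize ρA a = u
      induction u using TensorProduct.induction_on with
      | zero => simp
      | add x y hx hy => simpa only [map_add] using congrArg₂ _ hx hy
      | tmul x y => simp [cvPush, iA, iH, I]
    let E : A →ₗ[k] A := cvStar ρA LinearMap.id G
    have hE : ∀ a, E a ∈ coinv ρA := by
      intro a
      have h1 : R.toLinearMap ∘ₗ E = iA.toLinearMap ∘ₗ E := by
        rw [cvStar_push, cvStar_push, LinearMap.comp_id, LinearMap.comp_id, F2]
        conv_lhs => rw [hR]; enter [2]; rw [hρstar]
        rw [cvStar_star ρA hρ_coassoc, ← mul_assoc, hISp, one_mul]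
      exact LinearMap.congr_fun h1 a
    have hEF : cvStar ρA E F = LinearMap.id := by
      rw [cvStar_star ρA hρ_coassoc, hGF, cvStar_one ρA hρ_counit]
    let T : A ⊗[k] (H ⊗[k] H) →ₗ[k] A := sandwich f fInv ∘ₗ
      lTensor A (TensorProduct.comm k H H).toLinearMap
    trans (commSub ρA).mkQ (cvStar ρA E F a)
    · have hc := LinearMap.congr_fun hρ_coassoc a
      simp only [LinearMap.comp_apply] at hc
      trans (commSub ρA).mkQ (T (lTensor A Δ (ρA a)))
      · simp only [LinearMap.comp_apply, hρQ]
        generalize ρA a = u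
        induction u using TensorProduct.induction_on with
        | zero => simp
        | add x y hx hy => simp only [map_add, hx, hy]
        | tmul x y =>
          simp only [rTensor_tmul, LinearEquiv.coe_coe, TensorProduct.comm_tmul, hactQ]
          congr 1
          rw [hF, hG, ← intActL_tmul]
          simp [intActL, T]
      · rw [← hc]
        simp only [cvStar, LinearMap.comp_apply]
        generalize ρA a = u
        induction u using TensorProduct.induction_on with
        | zero => simp
        | add x y hx hy => simp only [map_add, hx, hy]
        | tmul x y =>
          rw [TensorProduct.map_tmul, LinearMap.mul'_apply, hcomm _ (hE x)]
          congr 1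
          simp only [E, cvStar, LinearMap.comp_apply, rTensor_tmul]
          generalize ρA x = v
          induction v using TensorProduct.induction_on with
          | zero => simp
          | add x y hx hy => simp only [map_add, hx, hy, TensorProduct.add_tmul, mul_add]
          | tmul x z => simp [T, sandwich, hF, hG, mul_assoc]
    · rw [hEF]; rfl
end
end
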